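/- arXiv:1111.6782 — 2 statements merged into one kernel-verified Lean document; each statement's English description precedes it below -/
import Mathlib

section
/- Let α ∈ (2,3), n ≥ 2, let γ ∈ H^{(1+α)/2,2}(ℝ/ℤ,ℝⁿ) be injective and parametrized by arc-length, and let h ∈ H^{(1+α)/2,2}(ℝ/ℤ,ℝⁿ). Then the double integral defining R(γ,h) converges absolutely (no principal value is needed), the principal value defining Q(γ,h) exists, and δE^α(γ;h) = α·Q(γ,h) + R(γ,h). -/
open MeasureTheory Filter Set
open scoped RealInnerProductSpace ENNReal Topology

noncomputable section

/-- `ℝⁿ` -/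
abbrev Rn (n : ℕ) := EuclideanSpace ℝ (Fin n)

variable {n : ℕ}

/-- A 1-periodic curve is injective as a map on `ℝ/ℤ`. -/
def PerInjective (γ : ℝ → Rn n) : Prop :=
  ∀ u v : ℝ, γ u = γ v → ∃ k : ℤ, v = u + k

/-- `γ` is a regular curve: `γ'(u) ≠ 0` for all `u`. -/
def RegularCurve (γ : ℝ → Rn n) : Prop := ∀ u : ℝ, deriv γ u ≠ 0

/-- `γ` is parametrized by arc-length: `|γ'(u)| = 1` for all `u`. -/
def ArcLengthParam (γ : ℝ → Rn n) : Prop := ∀ u : ℝ, ‖deriv γ u‖ = 1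

/-- The length `L(γ) = ∫₀¹ |γ'(θ)| dθ` of the closed curve `γ`. -/
def curveLen (γ : ℝ → Rn n) : ℝ := ∫ θ in (0:ℝ)..1, ‖deriv γ θ‖

/-- The arc length `L(γ|_{[u,u+w]}) = |∫_u^{u+w} |γ'(θ)| dθ|`. -/
def arcLen (γ : ℝ → Rn n) (u w : ℝ) : ℝ := |∫ θ in u..(u + w), ‖deriv γ θ‖|

/-- The intrinsic distance `d_γ(u+w,u)`. -/
def idist (γ : ℝ → Rn n) (u w : ℝ) : ℝ :=
  min (arcLen γ u w) (curveLen γ - arcLen γ u w)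

/-- The integrand of the O'Hara energy `E^α`. -/
def ohIntegrand (α : ℝ) (γ : ℝ → Rn n) (u w : ℝ) : ℝ :=
  (1 / ‖γ (u + w) - γ u‖ ^ α - 1 / idist γ u w ^ α) * ‖deriv γ (u + w)‖ * ‖deriv γ u‖

/-- The O'Hara energy `E^α`, with values in `[0,∞]`. -/
def oharaE (α : ℝ) (γ : ℝ → Rn n) : ℝ≥0∞ :=
  ∫⁻ u in Ioc (0:ℝ) 1, ∫⁻ w in Ioo (-(1:ℝ)/2) (1/2), ENNReal.ofReal (ohIntegrand α γ u w)

/-- The O'Hara energy `E^α` as a real number. -/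
def oharaER (α : ℝ) (γ : ℝ → Rn n) : ℝ := (oharaE α γ).toReal

/-- `[−1/2,−ε] ∪ [ε,1/2]`, the `w`-section of `U_ε`. -/
def Wset (ε : ℝ) : Set ℝ := Icc (-(1:ℝ)/2) (-ε) ∪ Icc ε (1/2)

/-- The truncated O'Hara energy `E^α_ε`, an integral over `U_ε`. -/
def oharaEeps (α ε : ℝ) (γ : ℝ → Rn n) : ℝ :=
  ∫ u in Ioc (0:ℝ) 1, ∫ w in Wset ε, ohIntegrand α γ u w

/-- `F` has directional (Gâteaux) derivative `d` at `γ` in direction `h`. -/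
def HasDirDeriv (F : (ℝ → Rn n) → ℝ) (γ h : ℝ → Rn n) (d : ℝ) : Prop :=
  Tendsto (fun τ : ℝ => (F (γ + τ • h) - F γ) / τ) (𝓝[≠] (0:ℝ)) (𝓝 d)

/-- Squared Gagliardo seminorm `[f]²_{H^{s,2}}` of a 1-periodic map. -/
def gagliardoSq (s : ℝ) {E : Type*} [NormedAddCommGroup E] (f : ℝ → E) : ℝ≥0∞ :=
  ∫⁻ u in Ioc (0:ℝ) 1, ∫⁻ w in Ioo (-(1:ℝ)/2) (1/2),
    ENNReal.ofReal (‖f (u + w) - f u‖ ^ 2 / |w| ^ (1 + 2 * s))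

/-- Membership in the fractional Sobolev space `H^{1+σ,2}(ℝ/ℤ,ℝⁿ)`, `σ ∈ (0,1)`:
a 1-periodic `C¹` function whose derivative has finite Gagliardo seminorm of order `σ`. -/
def MemH1 (σ : ℝ) (γ : ℝ → Rn n) : Prop :=
  Function.Periodic γ 1 ∧ ContDiff ℝ 1 γ ∧ gagliardoSq σ (deriv γ) < ⊤

/-- The norm of `H^{1+σ,2}(ℝ/ℤ,ℝⁿ)`. -/
def H1Norm (σ : ℝ) (γ : ℝ → Rn n) : ℝ :=
  Real.sqrt (∫ u in Ioc (0:ℝ) 1, (‖γ u‖ ^ 2 + ‖deriv γ u‖ ^ 2)) +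
    Real.sqrt ((gagliardoSq σ (deriv γ)).toReal)

/-- Membership of a 1-periodic map in `L²(ℝ/ℤ)`. -/
def MemL2per {E : Type*} [NormedAddCommGroup E] (f : ℝ → E) : Prop :=
  Function.Periodic f 1 ∧ AEStronglyMeasurable f (volume : Measure ℝ) ∧
    IntegrableOn (fun u => ‖f u‖ ^ 2) (Ioc (0:ℝ) 1) volume

/-- Membership in the fractional Sobolev space `H^{s,2}(ℝ/ℤ)`, `s ∈ (0,1)`. -/
def MemHs0 (s : ℝ) {E : Type*} [NormedAddCommGroup E] (f : ℝ → E) : Prop :=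
  MemL2per f ∧ gagliardoSq s f < ⊤

/-- The norm of `H^{s,2}(ℝ/ℤ)` for `s ∈ (0,1)`: `‖f‖_{L²} + [f]_{H^{s,2}}`. -/
def Hs0Norm (s : ℝ) {E : Type*} [NormedAddCommGroup E] (f : ℝ → E) : ℝ :=
  Real.sqrt (∫ u in Ioc (0:ℝ) 1, ‖f u‖ ^ 2) + Real.sqrt ((gagliardoSq s f).toReal)

/-- The `k`-th Fourier coefficient (`j`-th component) of a 1-periodic curve. -/
def fCoef (γ : ℝ → Rn n) (k : ℤ) (j : Fin n) : ℂ :=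
  ∫ u in (0:ℝ)..1, (γ u j : ℂ) * Complex.exp ((-2) * (Real.pi : ℂ) * Complex.I * (k : ℂ) * (u : ℂ))

/-- Membership in `H^{s,2}(ℝ/ℤ,ℝⁿ)` via the Fourier characterization:
`((1+|k|²)^{s/2} γ̂(k))_k ∈ ℓ²`. -/
def MemHF (s : ℝ) (γ : ℝ → Rn n) : Prop :=
  Function.Periodic γ 1 ∧ Continuous γ ∧
    Summable (fun k : ℤ => (1 + (k : ℝ) ^ 2) ^ s * ∑ j, ‖fCoef γ k j‖ ^ 2)

/-- The squared Fourier norm of `H^{s,2}(ℝ/ℤ,ℝⁿ)`. -/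
def fNormSq (s : ℝ) (γ : ℝ → Rn n) : ℝ :=
  ∑' k : ℤ, (1 + (k : ℝ) ^ 2) ^ s * ∑ j, ‖fCoef γ k j‖ ^ 2

/-- C¹-norm of a 1-periodic map. -/
def c1Norm (f : ℝ → Rn n) : ℝ := ⨆ u : Icc (0:ℝ) 1, (‖f u.1‖ + ‖deriv f u.1‖)

/-- The integrand of `Q(γ,h)`. -/
def Qintegrand (α : ℝ) (γ h : ℝ → Rn n) (u w : ℝ) : ℝ :=
  ⟪deriv γ u, deriv h u⟫ / |w| ^ α
    - ⟪γ (u + w) - γ u, h (u + w) - h u⟫ / |w| ^ (α + 2)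

/-- The integrand of `R(γ,h)`. -/
def Rintegrand (α : ℝ) (γ h : ℝ → Rn n) (u w : ℝ) : ℝ :=
  2 * ⟪deriv γ u, deriv h u⟫ * (1 / ‖γ (u + w) - γ u‖ ^ α - 1 / |w| ^ α)
    - α * ⟪γ (u + w) - γ u, h (u + w) - h u⟫ *
        (1 / ‖γ (u + w) - γ u‖ ^ (α + 2) - 1 / |w| ^ (α + 2))

/-- `R(γ,h)`, an absolutely convergent double integral over `(ℝ/ℤ) × [−1/2,1/2]`. -/
def Rval (α : ℝ) (γ h : ℝ → Rn n) : ℝ :=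
  ∫ p in (Ioc (0:ℝ) 1) ×ˢ (Icc (-(1:ℝ)/2) (1/2)), Rintegrand α γ h p.1 p.2

/-!
For `x = γ'`, rescaling the parameter interval to `[0, 1]` writes the O'Hara integrand, up to the
choice of arc realizing the intrinsic distance, as `|w| ^ (-α)` times a function of the velocity
path `θ ↦ x (u + w θ)` comparing its arc length `∫ ‖x‖` with its chord `‖∫ x‖`. That function and
its first variation are controlled by the mean square oscillations of `γ'` and `h'` along the path,
and `|w| ^ (-α)` times these oscillations integrates to at most the Gagliardo seminorm of order
`(α - 1) / 2`. Hence differentiation under the integral is dominated; the choice of arc contributes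
nothing to first order at an arc-length curve, because the arcs only compete near `|w| = 1 / 2`,
in a region of size `O(τ)` on which the integrand changes by `O(τ)`.

The resulting derivative exceeds the integrand of `α Q + R` by two terms that are integrable only
away from `w = 0`: a flux, odd under exchanging the two points, and a mean deviation whose integral
in `u` vanishes. Truncating at `|w| = ε` makes both disappear, so `Q` exists as a principal value,
whereas the integrand of `R` obeys the oscillation bound by itself.
-/

section Averages

variable {Ω F G H : Type*} [MeasurableSpace Ω] {μ : Measure Ω} [IsProbabilityMeasure μ]
  [NormedAddCommGroup F] [NormedSpace ℝ F] [CompleteSpace F]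
  [NormedAddCommGroup G] [NormedSpace ℝ G] [CompleteSpace G]
  [NormedAddCommGroup H] [NormedSpace ℝ H] [CompleteSpace H]

theorem sq_norm_integral_le_integral_sq_norm {f : Ω → F} (hf : MemLp f 2 μ) :
    ‖∫ x, f x ∂μ‖ ^ 2 ≤ ∫ x, ‖f x‖ ^ 2 ∂μ :=
  (convexOn_univ_norm.pow (fun _ _ => norm_nonneg _) 2).map_integral_le
    (by fun_prop) isClosed_univ (by simp) (hf.integrable one_le_two) hf.norm.integrable_sq

theorem integral_bilin_sub_bilin_integral (B : F →L[ℝ] G →L[ℝ] H) {f : Ω → F} {g : Ω → G}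
    (hf : MemLp f 2 μ) (hg : MemLp g 2 μ) (f₀ : F) (g₀ : G) :
    ∫ x, B (f x) (g x) ∂μ - B (∫ x, f x ∂μ) (∫ x, g x ∂μ) =
      ∫ x, B (f x - f₀) (g x - g₀) ∂μ - B (∫ x, f x - f₀ ∂μ) (∫ x, g x - g₀ ∂μ) := by
  have hf1 : Integrable f μ := hf.integrable one_le_two
  have hg1 : Integrable g μ := hg.integrable one_le_two
  have hfg : Integrable (fun x => B (f x) (g x)) μ := memLp_one_iff_integrable.1 (hf.of_bilin
    (fun a b => B a b) ‖B‖₊ hg (B.aestronglyMeasurable_comp₂ hf.1 hg.1)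
    (.of_forall fun x => B.le_opNorm₂ _ _))
  have hcg : Integrable (fun x => B f₀ (g x)) μ := (B f₀).integrable_comp hg1
  have hfc : Integrable (fun x => B (f x) g₀) μ := (B.flip g₀).integrable_comp hf1
  have hexpand : ∫ x, B (f x - f₀) (g x - g₀) ∂μ = ∫ x, B (f x) (g x) ∂μ
      - B f₀ (∫ x, g x ∂μ) - (B (∫ x, f x ∂μ) g₀ - B f₀ g₀) := by
    have hfc' : ∫ x, B (f x) g₀ ∂μ = B (∫ x, f x ∂μ) g₀ := (B.flip g₀).integral_comp_comm hf1
    simp only [map_sub, _root_.sub_apply]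
    rw [integral_sub (hfg.sub' hcg) (hfc.sub' (integrable_const _)), integral_sub hfg hcg,
      integral_sub hfc (integrable_const _), (B f₀).integral_comp_comm hg1, hfc']
    simp
  rw [hexpand, integral_sub hf1 (integrable_const _), integral_sub hg1 (integrable_const _)]
  simp only [integral_const, probReal_univ, one_smul, map_sub, _root_.sub_apply]
  abel

/-- The covariance is unchanged by translations of `f` and `g`, which is what makes the bound
quadratic in the oscillation. -/
theorem norm_integral_bilin_sub_bilin_integral_le (B : F →L[ℝ] G →L[ℝ] H) {f : Ω → F} {g : Ω → G}
    (hf : MemLp f 2 μ) (hg : MemLp g 2 μ) (f₀ : F) (g₀ : G) :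
    ‖∫ x, B (f x) (g x) ∂μ - B (∫ x, f x ∂μ) (∫ x, g x ∂μ)‖ ≤
      ‖B‖ * (∫ x, ‖f x - f₀‖ ^ 2 ∂μ + ∫ x, ‖g x - g₀‖ ^ 2 ∂μ) := by
  have hf0 : MemLp (fun x => f x - f₀) 2 μ := hf.sub (memLp_const _)
  have hg0 : MemLp (fun x => g x - g₀) 2 μ := hg.sub (memLp_const _)
  have hamgm (a : F) (b : G) : ‖B a b‖ ≤ ‖B‖ / 2 * (‖a‖ ^ 2 + ‖b‖ ^ 2) :=
    calc ‖B a b‖ ≤ ‖B‖ * ‖a‖ * ‖b‖ := B.le_opNorm₂ a b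
      _ ≤ ‖B‖ / 2 * (‖a‖ ^ 2 + ‖b‖ ^ 2) := by
        nlinarith [mul_nonneg (norm_nonneg B) (sq_nonneg (‖a‖ - ‖b‖))]
  have hmean : ‖∫ x, B (f x - f₀) (g x - g₀) ∂μ‖ ≤
      ‖B‖ / 2 * (∫ x, ‖f x - f₀‖ ^ 2 ∂μ + ∫ x, ‖g x - g₀‖ ^ 2 ∂μ) := by
    rw [← integral_add hf0.norm.integrable_sq hg0.norm.integrable_sq, ← integral_const_mul]
    exact norm_integral_le_of_norm_le
      ((hf0.norm.integrable_sq.add hg0.norm.integrable_sq).const_mul _)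
      (.of_forall fun x => hamgm _ _)
  have hprod : ‖B (∫ x, f x - f₀ ∂μ) (∫ x, g x - g₀ ∂μ)‖ ≤
      ‖B‖ / 2 * (∫ x, ‖f x - f₀‖ ^ 2 ∂μ + ∫ x, ‖g x - g₀‖ ^ 2 ∂μ) := by
    refine (hamgm _ _).trans ?_
    gcongr
    exacts [sq_norm_integral_le_integral_sq_norm hf0, sq_norm_integral_le_integral_sq_norm hg0]
  rw [integral_bilin_sub_bilin_integral B hf hg f₀ g₀]
  linarith [norm_sub_le (∫ x, B (f x - f₀) (g x - g₀) ∂μ)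
    (B (∫ x, f x - f₀ ∂μ) (∫ x, g x - g₀ ∂μ))]

theorem norm_mul_norm_sub_inner_le {E : Type*} [NormedAddCommGroup E] [InnerProductSpace ℝ E]
    (x y : E) : ‖x‖ * ‖y‖ - ⟪x, y⟫ ≤ ‖x - y‖ ^ 2 / 2 := by
  nlinarith [norm_sub_sq_real x y, sq_nonneg (‖x‖ - ‖y‖)]

theorem norm_mul_integral_norm_sub_norm_integral_le {E : Type*} [NormedAddCommGroup E]
    [InnerProductSpace ℝ E] [CompleteSpace E] {f : Ω → E} (hf : MemLp f 2 μ) (v : E) :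
    ‖v‖ * (∫ x, ‖f x‖ ∂μ - ‖∫ x, f x ∂μ‖) ≤ (∫ x, ‖f x - v‖ ^ 2 ∂μ) / 2 := by
  have hf1 : Integrable f μ := hf.integrable one_le_two
  have hinner : Integrable (fun x => ⟪f x, v⟫) μ := hf1.inner_const v
  have hproj : ∫ x, ⟪f x, v⟫ ∂μ ≤ ‖∫ x, f x ∂μ‖ * ‖v‖ := by
    simpa only [real_inner_comm, integral_inner hf1 v] using
      real_inner_le_norm (∫ x, f x ∂μ) v
  have hgap : ∫ x, (‖f x‖ * ‖v‖ - ⟪f x, v⟫) ∂μ ≤ ∫ x, ‖f x - v‖ ^ 2 / 2 ∂μ :=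
    integral_mono ((hf1.norm.mul_const _).sub hinner)
      ((hf.sub (memLp_const v)).norm.integrable_sq.div_const 2)
      fun x => norm_mul_norm_sub_inner_le (f x) v
  rw [integral_sub (hf1.norm.mul_const _) hinner, integral_mul_const, integral_div] at hgap
  linarith

end Averages

section Normalize

variable {E : Type*} [NormedAddCommGroup E]

theorem rpow_neg_lipschitz {s m a b : ℝ} (hs : 0 ≤ s) (hm : 0 < m) (ha : m ≤ a) (hb : m ≤ b) :
    |a ^ (-s) - b ^ (-s)| ≤ s * m ^ (-s - 1) * |a - b| := by
  refine (convex_Ici m).norm_image_sub_le_of_norm_hasDerivWithin_le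
    (f' := fun t => -s * t ^ (-s - 1))
    (fun t ht => (Real.hasDerivAt_rpow_const (Or.inl (hm.trans_le ht).ne')).hasDerivWithinAt)
    (fun t ht => ?_) hb ha
  have ht0 : 0 < t := hm.trans_le ht
  rw [norm_mul, norm_neg, Real.norm_of_nonneg hs, Real.norm_of_nonneg (Real.rpow_nonneg ht0.le _)]
  exact mul_le_mul_of_nonneg_left (Real.rpow_le_rpow_of_nonpos hm ht (by linarith)) hs

variable [InnerProductSpace ℝ E]

theorem norm_normalize_le_one {F : Type*} [NormedAddCommGroup F] [NormedSpace ℝ F] (x : F) :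
    ‖NormedSpace.normalize x‖ ≤ 1 := by
  obtain rfl | hx := eq_or_ne x 0
  · simp
  · exact (NormedSpace.norm_normalize_eq_one_iff.2 hx).le

theorem abs_inner_normalize_le (x y : E) : |⟪NormedSpace.normalize x, y⟫| ≤ ‖y‖ :=
  (abs_real_inner_le_norm _ _).trans
    (mul_le_of_le_one_left (norm_nonneg _) (norm_normalize_le_one x))

theorem norm_mul_norm_normalize_sub_normalize_le {F : Type*} [NormedAddCommGroup F]
    [NormedSpace ℝ F] (x y : F) :
    ‖x‖ * ‖NormedSpace.normalize x - NormedSpace.normalize y‖ ≤ 2 * ‖x - y‖ := by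
  have hsplit : ‖x‖ • (NormedSpace.normalize x - NormedSpace.normalize y) =
      (x - y) - (‖x‖ - ‖y‖) • NormedSpace.normalize y := by
    rw [smul_sub, NormedSpace.norm_smul_normalize, sub_smul, NormedSpace.norm_smul_normalize]
    abel
  calc ‖x‖ * ‖NormedSpace.normalize x - NormedSpace.normalize y‖
      = ‖(x - y) - (‖x‖ - ‖y‖) • NormedSpace.normalize y‖ := by
        rw [← hsplit, norm_smul, norm_norm]
    _ ≤ ‖x - y‖ + |‖x‖ - ‖y‖| * 1 := by
        refine (norm_sub_le _ _).trans ?_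
        rw [norm_smul, Real.norm_eq_abs]
        gcongr
        exact norm_normalize_le_one y
    _ ≤ 2 * ‖x - y‖ := by linarith [abs_norm_sub_norm_le x y]

theorem hasDerivAt_norm_add_smul (x y : E) {τ : ℝ} (h : x + τ • y ≠ 0) :
    HasDerivAt (fun t : ℝ => ‖x + t • y‖) ⟪NormedSpace.normalize (x + τ • y), y⟫ τ := by
  have hline : HasDerivAt (fun t : ℝ => x + t • y) y τ := by
    simpa using ((hasDerivAt_id τ).smul_const y).const_add x
  have hnorm := hline.norm_sq.sqrt (by simpa using h)
  simp only [Real.sqrt_sq (norm_nonneg _)] at hnorm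
  refine hnorm.congr_deriv ?_
  rw [NormedSpace.normalize, real_inner_smul_left]
  field_simp

end Normalize

section Paths

instance isProbabilityMeasure_restrict_Ioc_zero_one :
    IsProbabilityMeasure (volume.restrict (Ioc (0 : ℝ) 1)) := ⟨by simp⟩

variable {E : Type*} [NormedAddCommGroup E]

theorem memLp_restrict_Ioc_of_continuous {f : ℝ → E} (hf : Continuous f) (p : ℝ≥0∞) (a b : ℝ) :
    MemLp f p (volume.restrict (Ioc a b)) := by
  obtain ⟨C, hC⟩ := isCompact_Icc.exists_bound_of_continuousOn (s := Icc a b) hf.continuousOn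
  exact .of_bound hf.aestronglyMeasurable C
    (ae_restrict_of_forall_mem measurableSet_Ioc fun x hx => hC x (Ioc_subset_Icc_self hx))

theorem abs_integral_Ioc_zero_one_sub_le {f : ℝ → ℝ} {c ξ : ℝ} (hf : Continuous f)
    (h : ∀ θ, |f θ - c| ≤ ξ) : |(∫ θ in Ioc (0 : ℝ) 1, f θ) - c| ≤ ξ := by
  have hsub : ∫ θ in Ioc (0 : ℝ) 1, (f θ - c) = (∫ θ in Ioc (0 : ℝ) 1, f θ) - c := by
    rw [integral_sub hf.integrableOn_Ioc (integrable_const _)]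
    simp
  rw [← hsub]
  simpa using norm_integral_le_of_norm_le_const (μ := volume.restrict (Ioc (0 : ℝ) 1))
    (f := fun θ => f θ - c) (.of_forall h)

/-- The mean square oscillation of a path on `[0, 1]` about its initial value. -/
def sqOsc (X : ℝ → E) : ℝ := ∫ θ in Ioc (0 : ℝ) 1, ‖X θ - X 0‖ ^ 2

theorem sqOsc_nonneg (X : ℝ → E) : 0 ≤ sqOsc X := integral_nonneg fun _ => by positivity

theorem integral_sq_norm_le_mul_sqOsc {F : Type*} [NormedAddCommGroup F] {X : ℝ → E}
    (hX : Continuous X) {f : ℝ → F} {L : ℝ} (h : ∀ θ, ‖f θ‖ ≤ L * ‖X θ - X 0‖) :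
    ∫ θ in Ioc (0 : ℝ) 1, ‖f θ‖ ^ 2 ≤ L ^ 2 * sqOsc X := by
  rw [sqOsc, ← integral_const_mul]
  refine integral_mono_of_nonneg (.of_forall fun θ => by positivity)
    (Continuous.integrableOn_Ioc (by fun_prop)) (.of_forall fun θ => ?_)
  simpa only [mul_pow] using pow_le_pow_left₀ (norm_nonneg _) (h θ) 2

variable [NormedSpace ℝ E] {m R M s : ℝ} {X : ℝ → E}

theorem sqOsc_add_smul_le {x y : ℝ → E} (hx : Continuous x) (hy : Continuous y)
    {τ : ℝ} (hτ : |τ| ≤ 1) : sqOsc (x + τ • y) ≤ 2 * (sqOsc x + sqOsc y) := by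
  have hxi : IntegrableOn (fun θ => ‖x θ - x 0‖ ^ 2) (Ioc 0 1) :=
    Continuous.integrableOn_Ioc (by fun_prop)
  have hyi : IntegrableOn (fun θ => ‖y θ - y 0‖ ^ 2) (Ioc 0 1) :=
    Continuous.integrableOn_Ioc (by fun_prop)
  rw [sqOsc, sqOsc, sqOsc, ← integral_add hxi hyi, ← integral_const_mul]
  refine integral_mono_of_nonneg (.of_forall fun θ => by positivity)
    ((hxi.add hyi).const_mul 2) (.of_forall fun θ => ?_)
  have hnorm : ‖(x + τ • y) θ - (x + τ • y) 0‖ ≤ ‖x θ - x 0‖ + ‖y θ - y 0‖ := by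
    calc ‖(x + τ • y) θ - (x + τ • y) 0‖ = ‖(x θ - x 0) + τ • (y θ - y 0)‖ := by
          simp only [Pi.add_apply, Pi.smul_apply, smul_sub]
          congr 1
          abel
      _ ≤ ‖x θ - x 0‖ + |τ| * ‖y θ - y 0‖ :=
        (norm_add_le _ _).trans_eq (by rw [norm_smul, Real.norm_eq_abs])
      _ ≤ ‖x θ - x 0‖ + ‖y θ - y 0‖ := by
        gcongr
        exact mul_le_of_le_one_left (norm_nonneg _) hτ
  calc ‖(x + τ • y) θ - (x + τ • y) 0‖ ^ 2 ≤ (‖x θ - x 0‖ + ‖y θ - y 0‖) ^ 2 := by gcongr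
    _ ≤ 2 * (‖x θ - x 0‖ ^ 2 + ‖y θ - y 0‖ ^ 2) := add_sq_le

/-- A path of velocities whose speed is pinched between `m` and `R` and whose mean, which is the
difference quotient of the curve, is bounded below by `m`. -/
structure PinchedPath (m R : ℝ) (X : ℝ → E) : Prop where
  continuous : Continuous X
  le_norm : ∀ θ, m ≤ ‖X θ‖
  norm_le : ∀ θ, ‖X θ‖ ≤ R
  le_norm_integral : m ≤ ‖∫ θ in Ioc (0 : ℝ) 1, X θ‖

/-- The energy density of a path `X` of velocities: the powers `-s` of the chord `‖∫ X‖` and of the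
arc length `∫ ‖X‖` are compared, and weighted with the end speeds. -/
def chordArcDensity (s : ℝ) (X : ℝ → E) : ℝ :=
  ‖X 1‖ * ‖X 0‖ *
    (‖∫ θ in Ioc (0 : ℝ) 1, X θ‖ ^ (-s) - (∫ θ in Ioc (0 : ℝ) 1, ‖X θ‖) ^ (-s))

theorem continuous_normalize_comp (hX : Continuous X) (h : ∀ θ, X θ ≠ 0) :
    Continuous fun θ => NormedSpace.normalize (X θ) :=
  (hX.norm.inv₀ fun θ => norm_ne_zero_iff.2 (h θ)).smul hX

theorem norm_integral_Ioc_zero_one_le (h : ∀ θ, ‖X θ‖ ≤ M) :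
    ‖∫ θ in Ioc (0 : ℝ) 1, X θ‖ ≤ M := by
  simpa using norm_integral_le_of_norm_le_const (μ := volume.restrict (Ioc (0 : ℝ) 1))
    (.of_forall h)

namespace PinchedPath

theorem ne_zero (hX : PinchedPath m R X) (hm : 0 < m) (θ : ℝ) : X θ ≠ 0 :=
  norm_pos_iff.1 (hm.trans_le (hX.le_norm θ))

theorem integral_norm_le (hX : PinchedPath m R X) : ∫ θ in Ioc (0 : ℝ) 1, ‖X θ‖ ≤ R :=
  (le_abs_self _).trans (norm_integral_Ioc_zero_one_le (E := ℝ) fun θ => by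
    simpa using hX.norm_le θ)

theorem le_integral_norm (hX : PinchedPath m R X) : m ≤ ∫ θ in Ioc (0 : ℝ) 1, ‖X θ‖ :=
  hX.le_norm_integral.trans (norm_integral_le_integral_norm _)

theorem abs_rpow_neg_arc_le (hX : PinchedPath m R X) (hm : 0 < m) (hs : 0 ≤ s) :
    |(∫ θ in Ioc (0 : ℝ) 1, ‖X θ‖) ^ (-s)| ≤ m ^ (-s) := by
  rw [abs_of_nonneg (Real.rpow_nonneg (hm.le.trans hX.le_integral_norm) _)]
  exact Real.rpow_le_rpow_of_nonpos hm hX.le_integral_norm (neg_nonpos.2 hs)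

end PinchedPath

end Paths

section ChordArc

variable {E : Type*} [NormedAddCommGroup E] [InnerProductSpace ℝ E] {m R M s : ℝ} {X k : ℝ → E}

/-- The derivative of the arc length `∫ ‖X‖` in the direction `k`. -/
def arcDeriv (X k : ℝ → E) : ℝ := ∫ θ in Ioc (0 : ℝ) 1, ⟪NormedSpace.normalize (X θ), k θ⟫

/-- The derivative of half the difference of the squares of the chord `‖∫ X‖` and of the arc length
`∫ ‖X‖` in the direction `k`. -/
def sqChordArcDeriv (X k : ℝ → E) : ℝ :=
  ⟪∫ θ in Ioc (0 : ℝ) 1, X θ, ∫ θ in Ioc (0 : ℝ) 1, k θ⟫ -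
    (∫ θ in Ioc (0 : ℝ) 1, ‖X θ‖) * arcDeriv X k

/-- The derivative of `chordArcDensity s` at `X` in the direction `k`. -/
def chordArcDensityDeriv (s : ℝ) (X k : ℝ → E) : ℝ :=
  (⟪NormedSpace.normalize (X 1), k 1⟫ * ‖X 0‖ + ‖X 1‖ * ⟪NormedSpace.normalize (X 0), k 0⟫) *
      (‖∫ θ in Ioc (0 : ℝ) 1, X θ‖ ^ (-s) - (∫ θ in Ioc (0 : ℝ) 1, ‖X θ‖) ^ (-s)) -
    s * (‖X 1‖ * ‖X 0‖) *
      ((‖∫ θ in Ioc (0 : ℝ) 1, X θ‖ ^ (-(s + 2)) - (∫ θ in Ioc (0 : ℝ) 1, ‖X θ‖) ^ (-(s + 2))) *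
          ⟪∫ θ in Ioc (0 : ℝ) 1, X θ, ∫ θ in Ioc (0 : ℝ) 1, k θ⟫ +
        (∫ θ in Ioc (0 : ℝ) 1, ‖X θ‖) ^ (-(s + 2)) * sqChordArcDeriv X k)

theorem chordArcDensityDeriv_of_norm_eq_one (hX : ∀ θ, ‖X θ‖ = 1) (s : ℝ) (k : ℝ → E) :
    chordArcDensityDeriv s X k =
      (⟪X 1, k 1⟫ + ⟪X 0, k 0⟫) * (‖∫ θ in Ioc (0 : ℝ) 1, X θ‖ ^ (-s) - 1) -
        s * ((‖∫ θ in Ioc (0 : ℝ) 1, X θ‖ ^ (-(s + 2)) - 1) *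
            ⟪∫ θ in Ioc (0 : ℝ) 1, X θ, ∫ θ in Ioc (0 : ℝ) 1, k θ⟫ +
          (⟪∫ θ in Ioc (0 : ℝ) 1, X θ, ∫ θ in Ioc (0 : ℝ) 1, k θ⟫ -
            ∫ θ in Ioc (0 : ℝ) 1, ⟪X θ, k θ⟫)) := by
  have hT (θ : ℝ) : NormedSpace.normalize (X θ) = X θ :=
    NormedSpace.normalize_eq_self_of_norm_eq_one (hX θ)
  simp only [chordArcDensityDeriv, sqChordArcDeriv, arcDeriv, hT, hX, setIntegral_const,
    Measure.real, Real.volume_Ioc, sub_zero, ENNReal.ofReal_one, ENNReal.toReal_one, smul_eq_mul,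
    Real.one_rpow, mul_one, one_mul]

namespace PinchedPath

theorem norm_normalize_sub_normalize_le (hX : PinchedPath m R X) (hm : 0 < m) (θ : ℝ) :
    ‖NormedSpace.normalize (X θ) - NormedSpace.normalize (X 0)‖ ≤ 2 / m * ‖X θ - X 0‖ := by
  rw [div_mul_eq_mul_div, le_div_iff₀' hm]
  exact (mul_le_mul_of_nonneg_right (hX.le_norm θ) (norm_nonneg _)).trans
    (norm_mul_norm_normalize_sub_normalize_le _ _)

theorem abs_endSpeedDeriv_le (hX : PinchedPath m R X) (hkM : ∀ θ, ‖k θ‖ ≤ M) :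
    |⟪NormedSpace.normalize (X 1), k 1⟫ * ‖X 0‖ + ‖X 1‖ * ⟪NormedSpace.normalize (X 0), k 0⟫| ≤
      2 * M * R := by
  have hM : 0 ≤ M := (norm_nonneg _).trans (hkM 0)
  have hR : 0 ≤ R := (norm_nonneg _).trans (hX.norm_le 0)
  have hT (θ : ℝ) : |⟪NormedSpace.normalize (X θ), k θ⟫| ≤ M :=
    (abs_inner_normalize_le _ _).trans (hkM θ)
  calc _ ≤ |⟪NormedSpace.normalize (X 1), k 1⟫| * ‖X 0‖ +
        ‖X 1‖ * |⟪NormedSpace.normalize (X 0), k 0⟫| := by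
        refine (abs_add_le _ _).trans_eq ?_
        rw [abs_mul, abs_mul, abs_norm, abs_norm]
    _ ≤ M * R + R * M := by
        gcongr
        exacts [hT 1, hX.norm_le 0, hX.norm_le 1, hT 0]
    _ = 2 * M * R := by ring

theorem hasDerivAt_rpow_neg_chord {x y : ℝ → E} {τ : ℝ} (hx : Continuous x) (hy : Continuous y)
    (hX : PinchedPath m R (x + τ • y)) (hm : 0 < m) (s : ℝ) :
    HasDerivAt (fun t : ℝ => ‖∫ θ in Ioc (0 : ℝ) 1, (x + t • y) θ‖ ^ (-s))
      (-s * (‖∫ θ in Ioc (0 : ℝ) 1, (x + τ • y) θ‖ ^ (-(s + 2)) *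
        ⟪∫ θ in Ioc (0 : ℝ) 1, (x + τ • y) θ, ∫ θ in Ioc (0 : ℝ) 1, y θ⟫)) τ := by
  have hlin (t : ℝ) : ∫ θ in Ioc (0 : ℝ) 1, (x + t • y) θ =
      (∫ θ in Ioc (0 : ℝ) 1, x θ) + t • ∫ θ in Ioc (0 : ℝ) 1, y θ := by
    simp only [Pi.add_apply, Pi.smul_apply]
    rw [integral_add hx.integrableOn_Ioc (hy.fun_const_smul t).integrableOn_Ioc, integral_smul]
  have hpos := hm.trans_le hX.le_norm_integral
  simp only [hlin] at hpos ⊢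
  refine ((hasDerivAt_norm_add_smul _ _ (norm_pos_iff.1 hpos)).rpow_const
    (Or.inl hpos.ne')).congr_deriv ?_
  rw [NormedSpace.normalize, real_inner_smul_left, show -(s + 2) = -s - 1 - 1 by ring,
    Real.rpow_sub_one hpos.ne' (-s - 1)]
  field_simp

theorem hasDerivAt_integral_norm {x y : ℝ → E} {τ : ℝ} (hx : Continuous x) (hy : Continuous y)
    (hne : ∀ θ, (x + τ • y) θ ≠ 0) :
    HasDerivAt (fun t : ℝ => ∫ θ in Ioc (0 : ℝ) 1, ‖(x + t • y) θ‖)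
      (arcDeriv (x + τ • y) y) τ := by
  have hX (t : ℝ) : Continuous (x + t • y) := hx.add (hy.const_smul t)
  refine (hasDerivAt_integral_of_dominated_loc_of_lip (bound := fun θ => ‖y θ‖) univ_mem
    (.of_forall fun t => (hX t).norm.aestronglyMeasurable) (hX τ).norm.integrableOn_Ioc
    ((continuous_normalize_comp (hX τ) hne).inner hy).aestronglyMeasurable
    (.of_forall fun θ => ?_) hy.norm.integrableOn_Ioc
    (.of_forall fun θ => hasDerivAt_norm_add_smul _ _ (hne θ))).2
  refine LipschitzOnWith.of_dist_le_mul fun t _ t' _ => ?_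
  rw [Real.coe_nnabs, abs_norm, Real.dist_eq, Real.dist_eq]
  calc |‖(x + t • y) θ‖ - ‖(x + t' • y) θ‖| ≤ ‖(x + t • y) θ - (x + t' • y) θ‖ :=
        abs_norm_sub_norm_le _ _
    _ = ‖y θ‖ * |t - t'| := by
        simp only [Pi.add_apply, Pi.smul_apply, add_sub_add_left_eq_sub]
        rw [← sub_smul, norm_smul, Real.norm_eq_abs, mul_comm]

theorem hasDerivAt_chordArcDensity {x y : ℝ → E} {τ : ℝ} (hx : Continuous x) (hy : Continuous y)
    (hX : PinchedPath m R (x + τ • y)) (hm : 0 < m) (s : ℝ) :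
    HasDerivAt (fun t : ℝ => chordArcDensity s (x + t • y))
      (chordArcDensityDeriv s (x + τ • y) y) τ := by
  have hspeed (θ : ℝ) := hasDerivAt_norm_add_smul (x θ) (y θ) (hX.ne_zero hm θ)
  have hpos := hm.trans_le hX.le_integral_norm
  have harc := (hasDerivAt_integral_norm hx hy (hX.ne_zero hm)).rpow_const (p := -s)
    (Or.inl hpos.ne')
  have hpow : (∫ θ in Ioc (0 : ℝ) 1, ‖(x + τ • y) θ‖) ^ (-s - 1) =
      (∫ θ in Ioc (0 : ℝ) 1, ‖(x + τ • y) θ‖) ^ (-(s + 2)) *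
        ∫ θ in Ioc (0 : ℝ) 1, ‖(x + τ • y) θ‖ := by
    rw [← Real.rpow_add_one hpos.ne']
    ring_nf
  rw [hpow] at harc
  refine (((hspeed 1).mul (hspeed 0)).mul
    ((hX.hasDerivAt_rpow_neg_chord hx hy hm s).sub harc)).congr_deriv ?_
  simp only [chordArcDensityDeriv, sqChordArcDeriv, Pi.mul_apply, Pi.sub_apply, Pi.add_apply,
    Pi.smul_apply]
  ring

variable [CompleteSpace E]

theorem integral_norm_sub_norm_integral_le (hX : PinchedPath m R X) (hm : 0 < m) :
    (∫ θ in Ioc (0 : ℝ) 1, ‖X θ‖) - ‖∫ θ in Ioc (0 : ℝ) 1, X θ‖ ≤ sqOsc X / (2 * m) := by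
  have hgap := norm_mul_integral_norm_sub_norm_integral_le
    (memLp_restrict_Ioc_of_continuous hX.continuous 2 0 1) (X 0)
  have hnonneg := sub_nonneg.2 (norm_integral_le_integral_norm (μ := volume.restrict (Ioc 0 1)) X)
  rw [le_div_iff₀ (by positivity), sqOsc]
  linarith [mul_le_mul_of_nonneg_right (hX.le_norm 0) hnonneg]

theorem abs_rpow_neg_chord_sub_rpow_neg_arc_le (hX : PinchedPath m R X) (hm : 0 < m)
    (hs : 0 ≤ s) :
    |‖∫ θ in Ioc (0 : ℝ) 1, X θ‖ ^ (-s) - (∫ θ in Ioc (0 : ℝ) 1, ‖X θ‖) ^ (-s)| ≤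
      s * m ^ (-s - 1) / (2 * m) * sqOsc X := by
  refine (rpow_neg_lipschitz hs hm hX.le_norm_integral hX.le_integral_norm).trans ?_
  rw [abs_sub_comm, abs_of_nonneg (sub_nonneg.2 (norm_integral_le_integral_norm _)),
    div_mul_eq_mul_div, ← mul_div_assoc']
  gcongr
  exact hX.integral_norm_sub_norm_integral_le hm

theorem abs_chordArcDensity_le (hX : PinchedPath m R X) (hm : 0 < m) (hs : 0 ≤ s) :
    |chordArcDensity s X| ≤ R * R * (s * m ^ (-s - 1) / (2 * m)) * sqOsc X := by
  have hR : 0 ≤ R := (norm_nonneg _).trans (hX.norm_le 0)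
  rw [chordArcDensity, abs_mul, abs_mul, abs_norm, abs_norm, mul_assoc (R * R)]
  gcongr
  exacts [hX.norm_le 1, hX.norm_le 0, hX.abs_rpow_neg_chord_sub_rpow_neg_arc_le hm hs]

theorem norm_integral_sub_smul_integral_normalize_le (hX : PinchedPath m R X) (hm : 0 < m) :
    ‖(∫ θ in Ioc (0 : ℝ) 1, X θ) - (∫ θ in Ioc (0 : ℝ) 1, ‖X θ‖) •
      ∫ θ in Ioc (0 : ℝ) 1, NormedSpace.normalize (X θ)‖ ≤ (1 + (2 / m) ^ 2) * sqOsc X := by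
  have hT := continuous_normalize_comp hX.continuous (hX.ne_zero hm)
  have hcov := norm_integral_bilin_sub_bilin_integral_le (ContinuousLinearMap.lsmul ℝ ℝ (E := E))
    (memLp_restrict_Ioc_of_continuous hX.continuous.norm 2 0 1)
    (memLp_restrict_Ioc_of_continuous hT 2 0 1) ‖X 0‖ (NormedSpace.normalize (X 0))
  simp only [ContinuousLinearMap.lsmul_apply, NormedSpace.norm_smul_normalize] at hcov
  have hspeed := integral_sq_norm_le_mul_sqOsc hX.continuous (L := 1)
    (f := fun θ => ‖X θ‖ - ‖X 0‖) fun θ => by simpa using abs_norm_sub_norm_le (X θ) (X 0)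
  have htangent := integral_sq_norm_le_mul_sqOsc hX.continuous
    (hX.norm_normalize_sub_normalize_le hm)
  refine (hcov.trans (mul_le_of_le_one_left (by positivity)
    ContinuousLinearMap.opNorm_lsmul_le)).trans ?_
  linarith

theorem abs_arcDeriv_sub_inner_le (hX : PinchedPath m R X) (hm : 0 < m) (hk : Continuous k) :
    |arcDeriv X k - ⟪∫ θ in Ioc (0 : ℝ) 1, NormedSpace.normalize (X θ),
      ∫ θ in Ioc (0 : ℝ) 1, k θ⟫| ≤ (2 / m) ^ 2 * sqOsc X + sqOsc k := by
  have hT := continuous_normalize_comp hX.continuous (hX.ne_zero hm)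
  have hcov := norm_integral_bilin_sub_bilin_integral_le (innerSL ℝ (E := E))
    (memLp_restrict_Ioc_of_continuous hT 2 0 1) (memLp_restrict_Ioc_of_continuous hk 2 0 1)
    (NormedSpace.normalize (X 0)) (k 0)
  have htangent := integral_sq_norm_le_mul_sqOsc hX.continuous
    (hX.norm_normalize_sub_normalize_le hm)
  refine (hcov.trans (mul_le_of_le_one_left (by positivity) (norm_innerSL_le ℝ))).trans ?_
  exact add_le_add_left htangent _

theorem abs_sqChordArcDeriv_le (hX : PinchedPath m R X) (hm : 0 < m) (hk : Continuous k)
    (hkM : ∀ θ, ‖k θ‖ ≤ M) :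
    |sqChordArcDeriv X k| ≤
      ((1 + (2 / m) ^ 2) * M + R * ((2 / m) ^ 2 + 1)) * (sqOsc X + sqOsc k) := by
  have hM : 0 ≤ M := (norm_nonneg _).trans (hkM 0)
  have hR : 0 ≤ R := (norm_nonneg _).trans (hX.norm_le 0)
  have hX0 := sqOsc_nonneg X
  have hk0 := sqOsc_nonneg k
  have hsplit : sqChordArcDeriv X k =
      ⟪(∫ θ in Ioc (0 : ℝ) 1, X θ) - (∫ θ in Ioc (0 : ℝ) 1, ‖X θ‖) •
        ∫ θ in Ioc (0 : ℝ) 1, NormedSpace.normalize (X θ), ∫ θ in Ioc (0 : ℝ) 1, k θ⟫ -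
      (∫ θ in Ioc (0 : ℝ) 1, ‖X θ‖) * (arcDeriv X k -
        ⟪∫ θ in Ioc (0 : ℝ) 1, NormedSpace.normalize (X θ), ∫ θ in Ioc (0 : ℝ) 1, k θ⟫) := by
    rw [sqChordArcDeriv, inner_sub_left, real_inner_smul_left]
    ring
  have hchord : |⟪(∫ θ in Ioc (0 : ℝ) 1, X θ) - (∫ θ in Ioc (0 : ℝ) 1, ‖X θ‖) •
        ∫ θ in Ioc (0 : ℝ) 1, NormedSpace.normalize (X θ), ∫ θ in Ioc (0 : ℝ) 1, k θ⟫| ≤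
      (1 + (2 / m) ^ 2) * sqOsc X * M := by
    refine (abs_real_inner_le_norm _ _).trans ?_
    gcongr
    exacts [hX.norm_integral_sub_smul_integral_normalize_le hm, norm_integral_Ioc_zero_one_le hkM]
  have harc : |(∫ θ in Ioc (0 : ℝ) 1, ‖X θ‖) * (arcDeriv X k -
        ⟪∫ θ in Ioc (0 : ℝ) 1, NormedSpace.normalize (X θ), ∫ θ in Ioc (0 : ℝ) 1, k θ⟫)| ≤
      R * ((2 / m) ^ 2 * sqOsc X + sqOsc k) := by
    rw [abs_mul, abs_of_nonneg (integral_nonneg fun _ => norm_nonneg _)]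
    gcongr
    exacts [hX.integral_norm_le, hX.abs_arcDeriv_sub_inner_le hm hk]
  have hslack : 0 ≤ (1 + (2 / m) ^ 2) * M * sqOsc k + R * (sqOsc X + (2 / m) ^ 2 * sqOsc k) := by
    positivity
  rw [hsplit]
  linarith [(abs_sub _ _).trans (add_le_add hchord harc)]

theorem exists_abs_chordArcDensityDeriv_le (hm : 0 < m) (hs : 0 ≤ s) (R M : ℝ) :
    ∃ C, 0 ≤ C ∧ ∀ X k : ℝ → E, PinchedPath m R X → Continuous k → (∀ θ, ‖k θ‖ ≤ M) →
      |chordArcDensityDeriv s X k| ≤ C * (sqOsc X + sqOsc k) := by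
  let gap (p : ℝ) : ℝ := p * m ^ (-p - 1) / (2 * m)
  let S : ℝ := (1 + (2 / m) ^ 2) * M + R * ((2 / m) ^ 2 + 1)
  let C : ℝ := 2 * M * R * gap s +
    s * (R * R) * (gap (s + 2) * (R * M) + m ^ (-(s + 2)) * S)
  refine ⟨|C|, abs_nonneg C, fun X k hX hk hkM => ?_⟩
  have hM : 0 ≤ M := (norm_nonneg _).trans (hkM 0)
  have hR : 0 ≤ R := (norm_nonneg _).trans (hX.norm_le 0)
  set w := sqOsc X + sqOsc k
  have hXw : sqOsc X ≤ w := le_add_of_nonneg_right (sqOsc_nonneg k)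
  have hw : 0 ≤ w := (sqOsc_nonneg X).trans hXw
  have hgap {p : ℝ} (hp : 0 ≤ p) : |‖∫ θ in Ioc (0 : ℝ) 1, X θ‖ ^ (-p) -
      (∫ θ in Ioc (0 : ℝ) 1, ‖X θ‖) ^ (-p)| ≤ gap p * w :=
    (hX.abs_rpow_neg_chord_sub_rpow_neg_arc_le hm hp).trans (by gcongr)
  have hinner : |⟪∫ θ in Ioc (0 : ℝ) 1, X θ, ∫ θ in Ioc (0 : ℝ) 1, k θ⟫| ≤ R * M := by
    refine (abs_real_inner_le_norm _ _).trans ?_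
    gcongr
    exacts [norm_integral_Ioc_zero_one_le hX.norm_le, norm_integral_Ioc_zero_one_le hkM]
  have hsq : |sqChordArcDeriv X k| ≤ S * w := hX.abs_sqChordArcDeriv_le hm hk hkM
  have harc := hX.abs_rpow_neg_arc_le hm (by linarith : 0 ≤ s + 2)
  refine le_trans ?_ (mul_le_mul_of_nonneg_right (le_abs_self C) hw)
  calc |chordArcDensityDeriv s X k|
      ≤ 2 * M * R * (gap s * w) +
          s * (R * R) * (gap (s + 2) * w * (R * M) + m ^ (-(s + 2)) * (S * w)) := by
        refine (abs_sub _ _).trans (add_le_add ?_ ?_)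
        · rw [abs_mul]
          gcongr
          exacts [hX.abs_endSpeedDeriv_le hkM, hgap hs]
        · rw [abs_mul, abs_mul, abs_mul, abs_norm, abs_norm, abs_of_nonneg hs]
          gcongr
          · exact hX.norm_le 1
          · exact hX.norm_le 0
          · refine (abs_add_le _ _).trans (add_le_add ?_ ?_) <;> rw [abs_mul] <;> gcongr
            exact hgap (by linarith)
    _ = C * w := by ring

end PinchedPath

end ChordArc

section Majorant

theorem setLIntegral_comp_mul_left_le {S : Set ℝ} (hS : MeasurableSet S) {c : ℝ} (hc : c ≠ 0)
    (hcS : ∀ w ∈ S, c * w ∈ S) {F : ℝ → ℝ≥0∞} (hF : Measurable F) :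
    ∫⁻ w in S, F (c * w) ≤ ENNReal.ofReal |c⁻¹| * ∫⁻ w in S, F w := by
  have hdilate : ∫⁻ w, S.indicator F (c * w) = ENNReal.ofReal |c⁻¹| * ∫⁻ w, S.indicator F w := by
    rw [← lintegral_map (hF.indicator hS) (measurable_const_mul c), Real.map_volume_mul_left hc,
      lintegral_smul_measure, smul_eq_mul]
  rw [← lintegral_indicator hS, ← lintegral_indicator hS, ← hdilate]
  refine lintegral_mono fun w => ?_
  by_cases hw : w ∈ S
  · rw [indicator_of_mem hw, indicator_of_mem (hcS w hw)]
  · rw [indicator_of_notMem hw]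
    exact zero_le

theorem continuous_integral_Ioc_zero_one {Z F : Type*} [TopologicalSpace Z]
    [FirstCountableTopology Z] [LocallyCompactSpace Z] [NormedAddCommGroup F] [NormedSpace ℝ F]
    {f : Z → ℝ → F} (hf : Continuous f.uncurry) :
    Continuous fun z => ∫ θ in Ioc (0 : ℝ) 1, f z θ := by
  simp only [← integral_Icc_eq_integral_Ioc]
  exact continuous_parametric_integral_of_continuous hf isCompact_Icc

/-- Lebesgue measure on the fundamental domain `(0, 1] × [-1/2, 1/2]` of the pairs `(u, w)`. -/
def cylMeasure : Measure (ℝ × ℝ) :=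
  (volume.restrict (Ioc (0 : ℝ) 1)).prod (volume.restrict (Icc (-(1 : ℝ) / 2) (1 / 2)))

/-- The part of `x` between `u` and `u + w`, reparametrized by `[0, 1]`. -/
def pathAt {E : Type*} (x : ℝ → E) (u w θ : ℝ) : E := x (u + w * θ)

variable {E : Type*} [NormedAddCommGroup E] {x : ℝ → E} {α : ℝ}

theorem continuous_pathAt_uncurry (hx : Continuous x) :
    Continuous fun q : (ℝ × ℝ) × ℝ => pathAt x q.1.1 q.1.2 q.2 :=
  hx.comp (by fun_prop)

theorem continuous_pathAt (hx : Continuous x) (u w : ℝ) : Continuous (pathAt x u w) :=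
  hx.comp (by fun_prop)

theorem measurable_abs_snd_rpow (s : ℝ) : Measurable fun p : ℝ × ℝ => |p.2| ^ s :=
  (continuous_abs.measurable.comp measurable_snd).pow_const s

theorem continuous_sqOsc_pathAt (hx : Continuous x) :
    Continuous fun p : ℝ × ℝ => sqOsc (pathAt x p.1 p.2) :=
  continuous_integral_Ioc_zero_one
    (((hx.comp (by fun_prop)).sub (hx.comp (by fun_prop))).norm.pow 2)

theorem setLIntegral_sq_norm_dilate_le (hx : Continuous x) (u : ℝ) {θ : ℝ}
    (hθ : θ ∈ Ioc (0 : ℝ) 1) :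
    ∫⁻ w in Ioo (-(1 : ℝ) / 2) (1 / 2),
        ENNReal.ofReal (|w| ^ (-α) * ‖x (u + w * θ) - x u‖ ^ 2) ≤
      ENNReal.ofReal (θ ^ (α - 1)) * ∫⁻ w in Ioo (-(1 : ℝ) / 2) (1 / 2),
        ENNReal.ofReal (‖x (u + w) - x u‖ ^ 2 / |w| ^ α) := by
  obtain ⟨hθ0, hθ1⟩ := hθ
  let F (w : ℝ) : ℝ≥0∞ := ENNReal.ofReal (‖x (u + w) - x u‖ ^ 2 / |w| ^ α)
  have hF : Measurable F := ENNReal.measurable_ofReal.comp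
    ((Continuous.measurable (by fun_prop)).div (continuous_abs.measurable.pow_const α))
  have hdilate (w : ℝ) : ENNReal.ofReal (|w| ^ (-α) * ‖x (u + w * θ) - x u‖ ^ 2) =
      ENNReal.ofReal (θ ^ α) * F (θ * w) := by
    rw [← ENNReal.ofReal_mul (Real.rpow_nonneg hθ0.le _), abs_mul, abs_of_pos hθ0,
      Real.mul_rpow hθ0.le (abs_nonneg _), Real.rpow_neg (abs_nonneg _), mul_comm w θ]
    have := Real.rpow_pos_of_pos hθ0 α
    congr 1
    field_simp
  calc _ = ENNReal.ofReal (θ ^ α) * ∫⁻ w in Ioo (-(1 : ℝ) / 2) (1 / 2), F (θ * w) := by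
        simp_rw [hdilate]
        exact lintegral_const_mul _ (hF.comp (measurable_const_mul θ))
    _ ≤ ENNReal.ofReal (θ ^ α) * (ENNReal.ofReal |θ⁻¹| *
          ∫⁻ w in Ioo (-(1 : ℝ) / 2) (1 / 2), F w) := by
        gcongr
        refine setLIntegral_comp_mul_left_le measurableSet_Ioo hθ0.ne' (fun w hw => ?_) hF
        constructor <;> nlinarith [hw.1, hw.2]
    _ = _ := by
        rw [← mul_assoc, ← ENNReal.ofReal_mul (Real.rpow_nonneg hθ0.le _),
          abs_of_pos (inv_pos.2 hθ0), Real.rpow_sub_one hθ0.ne', div_eq_mul_inv (θ ^ α)]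

theorem ofReal_rpow_mul_sqOsc_pathAt (hx : Continuous x) (u w : ℝ) :
    ENNReal.ofReal (|w| ^ (-α) * sqOsc (pathAt x u w)) =
      ∫⁻ θ in Ioc (0 : ℝ) 1, ENNReal.ofReal (|w| ^ (-α) * ‖x (u + w * θ) - x u‖ ^ 2) := by
  rw [sqOsc, ← integral_const_mul, ofReal_integral_eq_lintegral_ofReal]
  · simp only [pathAt, mul_zero, add_zero]
  · exact Continuous.integrableOn_Ioc (by have := continuous_pathAt hx u w; fun_prop)
  · exact .of_forall fun θ => by positivity

/-- Swapping the integrals over `w` and `θ` and dilating `w` by `θ` produces the factor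
`∫₀¹ θ^(α-1) dθ`. -/
theorem lintegral_rpow_mul_sqOsc_pathAt_lt_top (hα : 0 < α) (hx : Continuous x)
    (hg : gagliardoSq ((α - 1) / 2) x < ⊤) :
    ∫⁻ p, ENNReal.ofReal (|p.2| ^ (-α) * sqOsc (pathAt x p.1 p.2)) ∂cylMeasure < ⊤ := by
  let f (u w θ : ℝ) : ℝ≥0∞ := ENNReal.ofReal (|w| ^ (-α) * ‖x (u + w * θ) - x u‖ ^ 2)
  have hf : Measurable fun q : (ℝ × ℝ) × ℝ => f q.1.1 q.1.2 q.2 :=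
    ENNReal.measurable_ofReal.comp (((measurable_abs_snd_rpow _).comp measurable_fst).mul
      (Continuous.measurable (by fun_prop)))
  have hpow : ∫⁻ θ in Ioc (0 : ℝ) 1, ENNReal.ofReal (θ ^ (α - 1)) < ⊤ :=
    ((intervalIntegrable_iff_integrableOn_Ioc_of_le zero_le_one).1
      (intervalIntegral.intervalIntegrable_rpow' (by linarith))).lintegral_lt_top
  have hfibre (u : ℝ) : ∫⁻ w in Icc (-(1 : ℝ) / 2) (1 / 2), ∫⁻ θ in Ioc (0 : ℝ) 1, f u w θ ≤
      (∫⁻ θ in Ioc (0 : ℝ) 1, ENNReal.ofReal (θ ^ (α - 1))) *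
        ∫⁻ w in Ioo (-(1 : ℝ) / 2) (1 / 2), ENNReal.ofReal (‖x (u + w) - x u‖ ^ 2 / |w| ^ α) := by
    rw [← restrict_Ioo_eq_restrict_Icc, lintegral_lintegral_swap (f := f u)
      (hf.comp (by fun_prop : Measurable fun q : ℝ × ℝ => ((u, q.1), q.2))).aemeasurable,
      ← lintegral_mul_const _ (by fun_prop)]
    exact setLIntegral_mono' measurableSet_Ioc fun θ hθ => setLIntegral_sq_norm_dilate_le hx u hθ
  simp_rw [ofReal_rpow_mul_sqOsc_pathAt hx]
  rw [cylMeasure, lintegral_prod _ hf.lintegral_prod_right'.aemeasurable]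
  refine (lintegral_mono hfibre).trans_lt ?_
  rw [lintegral_const_mul' _ _ hpow.ne]
  rw [gagliardoSq, show 1 + 2 * ((α - 1) / 2) = α by ring] at hg
  exact ENNReal.mul_lt_top hpow hg

theorem integrable_rpow_mul_sqOsc_pathAt (hα : 0 < α) (hx : Continuous x)
    (hg : gagliardoSq ((α - 1) / 2) x < ⊤) :
    Integrable (fun p : ℝ × ℝ => |p.2| ^ (-α) * sqOsc (pathAt x p.1 p.2)) cylMeasure := by
  refine ⟨((measurable_abs_snd_rpow _).mul
    (continuous_sqOsc_pathAt hx).measurable).aestronglyMeasurable, ?_⟩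
  rw [hasFiniteIntegral_iff_ofReal (.of_forall fun p =>
    mul_nonneg (Real.rpow_nonneg (abs_nonneg _) _) (sqOsc_nonneg _))]
  exact lintegral_rpow_mul_sqOsc_pathAt_lt_top hα hx hg

end Majorant

section Curves

theorem periodic_deriv {E : Type*} [NormedAddCommGroup E] [NormedSpace ℝ E] {f : ℝ → E} {c : ℝ}
    (hf : Function.Periodic f c) : Function.Periodic (deriv f) c := fun u => by
  rw [← deriv_comp_add_const, hf.funext]

theorem sub_eq_smul_integral_pathAt {E : Type*} [NormedAddCommGroup E] [NormedSpace ℝ E]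
    [CompleteSpace E] {f : ℝ → E} (hf : ContDiff ℝ 1 f) (u w : ℝ) :
    f (u + w) - f u = w • ∫ θ in Ioc (0 : ℝ) 1, pathAt (deriv f) u w θ := by
  simp only [pathAt]
  rw [← intervalIntegral.integral_of_le zero_le_one,
    intervalIntegral.smul_integral_comp_add_mul (deriv f) w u,
    intervalIntegral.integral_deriv_eq_sub' f rfl
      (fun _ _ => (hf.differentiable one_ne_zero).differentiableAt)
      (hf.continuous_deriv le_rfl).continuousOn]
  simp only [mul_zero, add_zero, mul_one]

theorem deriv_add_const_smul_eq {E : Type*} [NormedAddCommGroup E] [NormedSpace ℝ E] {f g : ℝ → E}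
    (hf : Differentiable ℝ f) (hg : Differentiable ℝ g) (τ : ℝ) :
    deriv (f + τ • g) = deriv f + τ • deriv g :=
  funext fun u => ((hf u).hasDerivAt.add ((hg u).hasDerivAt.const_smul τ)).deriv

variable {η h : ℝ → Rn n} {ξ α : ℝ}

theorem norm_sub_eq_abs_mul (hη : ContDiff ℝ 1 η) (u w : ℝ) :
    ‖η (u + w) - η u‖ = |w| * ‖∫ θ in Ioc (0 : ℝ) 1, pathAt (deriv η) u w θ‖ := by
  rw [sub_eq_smul_integral_pathAt hη, norm_smul, Real.norm_eq_abs]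

theorem arcLen_eq_abs_mul (η : ℝ → Rn n) (u w : ℝ) :
    arcLen η u w = |w| * ∫ θ in Ioc (0 : ℝ) 1, ‖pathAt (deriv η) u w θ‖ := by
  have hsub := intervalIntegral.smul_integral_comp_add_mul (a := 0) (b := 1)
    (fun t => ‖deriv η t‖) w u
  simp only [mul_zero, add_zero, mul_one] at hsub
  rw [arcLen, ← hsub, smul_eq_mul, abs_mul, intervalIntegral.integral_of_le zero_le_one,
    abs_of_nonneg (integral_nonneg fun _ => norm_nonneg _)]
  rfl

theorem norm_sub_le_arcLen (hη : ContDiff ℝ 1 η) (u w : ℝ) :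
    ‖η (u + w) - η u‖ ≤ arcLen η u w := by
  rw [norm_sub_eq_abs_mul hη, arcLen_eq_abs_mul]
  gcongr
  exact norm_integral_le_integral_norm _

theorem curveLen_sub_arcLen_eq (hη : ContDiff ℝ 1 η) (hp : Function.Periodic η 1) {u w : ℝ}
    (hw0 : 0 ≤ w) (hw1 : w ≤ 1) : curveLen η - arcLen η u w = arcLen η (u + w) (1 - w) := by
  have hper : Function.Periodic (fun t => ‖deriv η t‖) 1 := (periodic_deriv hp).comp norm
  have hint (a b : ℝ) : IntervalIntegrable (fun t => ‖deriv η t‖) volume a b :=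
    (hη.continuous_deriv le_rfl).norm.intervalIntegrable a b
  have habs {v s : ℝ} (hs : 0 ≤ s) : arcLen η v s = ∫ θ in v..(v + s), ‖deriv η θ‖ :=
    abs_of_nonneg (intervalIntegral.integral_nonneg (by linarith) fun _ _ => norm_nonneg _)
  have hlen : curveLen η = ∫ θ in u..(u + 1), ‖deriv η θ‖ := by
    rw [curveLen, hper.intervalIntegral_add_eq u 0, zero_add]
  rw [habs hw0, habs (sub_nonneg.2 hw1), hlen,
    intervalIntegral.integral_interval_sub_left (hint _ _) (hint _ _)]
  congr 1
  ring

theorem arcLen_add_neg (η : ℝ → Rn n) (u w : ℝ) : arcLen η (u + w) (-w) = arcLen η u w := by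
  rw [arcLen, arcLen, intervalIntegral.integral_symm, abs_neg, add_neg_cancel_right]

theorem norm_sub_le_curveLen_sub_arcLen_of_nonneg (hη : ContDiff ℝ 1 η)
    (hp : Function.Periodic η 1) (u : ℝ) {w : ℝ} (hw0 : 0 ≤ w) (hw1 : w ≤ 1) :
    ‖η (u + w) - η u‖ ≤ curveLen η - arcLen η u w := by
  rw [curveLen_sub_arcLen_eq hη hp hw0 hw1, norm_sub_rev, ← hp u,
    show u + 1 = u + w + (1 - w) by ring]
  exact norm_sub_le_arcLen hη _ _

theorem norm_sub_le_idist (hη : ContDiff ℝ 1 η) (hp : Function.Periodic η 1) (u : ℝ) {w : ℝ}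
    (hw : |w| ≤ 1) : ‖η (u + w) - η u‖ ≤ idist η u w := by
  refine le_min (norm_sub_le_arcLen hη u w) ?_
  rcases le_total 0 w with hw0 | hw0
  · exact norm_sub_le_curveLen_sub_arcLen_of_nonneg hη hp u hw0 (le_of_abs_le hw)
  · have := norm_sub_le_curveLen_sub_arcLen_of_nonneg hη hp (u + w) (neg_nonneg.2 hw0)
      (neg_le_of_abs_le hw |> neg_le.1)
    rwa [arcLen_add_neg, add_neg_cancel_right, norm_sub_rev] at this

/-- The part of the energy integrand due to the difference of arc length and intrinsic
distance. -/
def arcCorrection (α : ℝ) (η : ℝ → Rn n) (u w : ℝ) : ℝ :=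
  (arcLen η u w ^ (-α) - idist η u w ^ (-α)) * ‖deriv η (u + w)‖ * ‖deriv η u‖

theorem ohIntegrand_eq_chordArcDensity_add_arcCorrection (hη : ContDiff ℝ 1 η)
    (hp : Function.Periodic η 1) (α u : ℝ) {w : ℝ} (hw : |w| ≤ 1) :
    ohIntegrand α η u w =
      |w| ^ (-α) * chordArcDensity α (pathAt (deriv η) u w) + arcCorrection α η u w := by
  have hd : 0 ≤ idist η u w := (norm_nonneg _).trans (norm_sub_le_idist hη hp u hw)
  have harc : 0 ≤ ∫ θ in Ioc (0 : ℝ) 1, ‖pathAt (deriv η) u w θ‖ :=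
    integral_nonneg fun _ => norm_nonneg _
  rw [ohIntegrand, arcCorrection, chordArcDensity, one_div, one_div,
    ← Real.rpow_neg (norm_nonneg _), ← Real.rpow_neg hd, norm_sub_eq_abs_mul hη,
    arcLen_eq_abs_mul, Real.mul_rpow (abs_nonneg _) (norm_nonneg _),
    Real.mul_rpow (abs_nonneg _) harc]
  simp only [pathAt, mul_one, mul_zero, add_zero]
  ring

theorem arcCorrection_eq_zero_of_le {u w : ℝ} (hle : arcLen η u w ≤ curveLen η - arcLen η u w) :
    arcCorrection α η u w = 0 := by
  rw [arcCorrection, idist, min_eq_left hle, sub_self, zero_mul, zero_mul]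

theorem abs_arcLen_sub_abs_le (hη : ContDiff ℝ 1 η) (hξ : ∀ u, |‖deriv η u‖ - 1| ≤ ξ) (u w : ℝ) :
    |arcLen η u w - (|w|)| ≤ |w| * ξ := by
  have hmean := abs_integral_Ioc_zero_one_sub_le
    (continuous_pathAt (hη.continuous_deriv le_rfl) u w).norm fun θ => hξ (u + w * θ)
  rw [arcLen_eq_abs_mul, ← mul_sub_one, abs_mul, abs_abs]
  gcongr

theorem abs_curveLen_sub_one_le (hη : ContDiff ℝ 1 η) (hξ : ∀ u, |‖deriv η u‖ - 1| ≤ ξ) :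
    |curveLen η - 1| ≤ ξ := by
  rw [curveLen, intervalIntegral.integral_of_le zero_le_one]
  exact abs_integral_Ioc_zero_one_sub_le (hη.continuous_deriv le_rfl).norm hξ

theorem arcCorrection_eq_zero_of_abs_mul_le (hη : ContDiff ℝ 1 η)
    (hξ : ∀ u, |‖deriv η u‖ - 1| ≤ ξ) (u : ℝ) {w : ℝ} (hw : 2 * (|w| * (1 + ξ)) ≤ 1 - ξ) :
    arcCorrection α η u w = 0 := by
  refine arcCorrection_eq_zero_of_le ?_
  linarith [le_of_abs_le (abs_arcLen_sub_abs_le hη hξ u w),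
    neg_le_of_abs_le (abs_curveLen_sub_one_le hη hξ)]

/-- The correction only occurs where arc length and complementary arc length are both
close to `1/2`, hence where they differ by `O(ξ)`. -/
theorem abs_arcCorrection_le (hη : ContDiff ℝ 1 η) (hα : 0 ≤ α)
    (hξ : ∀ u, |‖deriv η u‖ - 1| ≤ ξ) (hξ' : ξ ≤ 1 / 10) (u : ℝ) {w : ℝ} (hw : |w| ≤ 1 / 2) :
    |arcCorrection α η u w| ≤ α * (1 / 4) ^ (-α - 1) * (2 * ξ) * 2 * 2 := by
  have hξ0 : 0 ≤ ξ := (abs_nonneg _).trans (hξ 0)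
  have hspeed (t : ℝ) : ‖deriv η t‖ ≤ 2 := by linarith [le_of_abs_le (hξ t)]
  have hL := abs_le.1 (abs_curveLen_sub_one_le hη hξ)
  have hA : arcLen η u w ≤ (1 + ξ) / 2 := by
    linarith [le_of_abs_le (abs_arcLen_sub_abs_le hη hξ u w),
      mul_le_mul_of_nonneg_right hw hξ0]
  rcases le_total (arcLen η u w) (curveLen η - arcLen η u w) with hle | hle
  · rw [arcCorrection_eq_zero_of_le hle, abs_zero]
    positivity
  · rw [arcCorrection, idist, min_eq_right hle, abs_mul, abs_mul, abs_norm, abs_norm]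
    have hpow := rpow_neg_lipschitz hα (m := 1 / 4) (a := arcLen η u w)
      (b := curveLen η - arcLen η u w) (by norm_num) (by linarith) (by linarith)
    have hdiff : |arcLen η u w - (curveLen η - arcLen η u w)| ≤ 2 * ξ := by
      rw [abs_of_nonneg (sub_nonneg.2 hle)]
      linarith
    have hpow' := hpow.trans (mul_le_mul_of_nonneg_left hdiff (by positivity))
    gcongr
    exacts [hspeed _, hspeed _]

theorem measurable_arcCorrection (hη : ContDiff ℝ 1 η) (α : ℝ) :
    Measurable fun p : ℝ × ℝ => arcCorrection α η p.1 p.2 := by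
  have hη' := hη.continuous_deriv le_rfl
  have harc : Continuous fun p : ℝ × ℝ => arcLen η p.1 p.2 := by
    simp only [arcLen_eq_abs_mul]
    exact continuous_snd.abs.mul
      (continuous_integral_Ioc_zero_one (continuous_pathAt_uncurry hη').norm)
  have hidist : Continuous fun p : ℝ × ℝ => idist η p.1 p.2 :=
    harc.min (continuous_const.sub harc)
  have hspeed : Continuous fun p : ℝ × ℝ => ‖deriv η (p.1 + p.2)‖ := by fun_prop
  have hspeed' : Continuous fun p : ℝ × ℝ => ‖deriv η p.1‖ := by fun_prop
  exact (((harc.measurable.pow_const _).sub (hidist.measurable.pow_const _)).mul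
    hspeed.measurable).mul hspeed'.measurable

end Curves

section Pinching

variable {E : Type*} [NormedAddCommGroup E] {x y : ℝ → E}

theorem exists_norm_le_of_periodic {c : ℝ} (hp : Function.Periodic x c) (hc : c ≠ 0)
    (hx : Continuous x) : ∃ M, ∀ u, ‖x u‖ ≤ M := by
  obtain ⟨M, hM⟩ := (hp.isBounded_of_continuous hc hx).exists_norm_le
  exact ⟨M, fun u => hM _ ⟨u, rfl⟩⟩

variable [NormedSpace ℝ E]

theorem integral_pathAt_zero [CompleteSpace E] (x : ℝ → E) (u : ℝ) :
    ∫ θ in Ioc (0 : ℝ) 1, pathAt x u 0 θ = x u := by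
  simp [pathAt]

theorem continuous_integral_pathAt (hx : Continuous x) :
    Continuous fun p : ℝ × ℝ => ∫ θ in Ioc (0 : ℝ) 1, pathAt x p.1 p.2 θ :=
  continuous_integral_Ioc_zero_one (continuous_pathAt_uncurry hx)

theorem exists_le_norm_integral_pathAt (hx : Continuous x) (hp : Function.Periodic x 1)
    (hne : ∀ u w : ℝ, |w| ≤ 1 / 2 → ∫ θ in Ioc (0 : ℝ) 1, pathAt x u w θ ≠ 0) :
    ∃ c, 0 < c ∧ ∀ u w : ℝ, |w| ≤ 1 / 2 → c ≤ ‖∫ θ in Ioc (0 : ℝ) 1, pathAt x u w θ‖ := by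
  have hper (w : ℝ) : Function.Periodic (fun u => ‖∫ θ in Ioc (0 : ℝ) 1, pathAt x u w θ‖) 1 :=
    fun u => by simp only [pathAt, add_right_comm u 1, hp _]
  have hK : IsCompact (Icc (0 : ℝ) 1 ×ˢ Icc (-(1 / 2 : ℝ)) (1 / 2)) :=
    isCompact_Icc.prod isCompact_Icc
  obtain ⟨p, hpK, hmin⟩ := hK.exists_isMinOn
    ⟨(0, 0), by constructor <;> constructor <;> norm_num⟩
    (continuous_integral_pathAt hx).norm.continuousOn
  refine ⟨_, norm_pos_iff.2 (hne p.1 p.2 (abs_le.2 hpK.2)), fun u w hw => ?_⟩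
  obtain ⟨v, hv, huv⟩ := (hper w).exists_mem_Ico₀ one_pos u
  rw [huv]
  exact isMinOn_iff.1 hmin (v, w) ⟨Ico_subset_Icc_self hv, abs_le.1 hw⟩

/-- The lower bound for the speed is the lower bound for the difference quotients at `w = 0`. -/
theorem exists_eventually_pinchedPath [CompleteSpace E] (hx : Continuous x)
    (hpx : Function.Periodic x 1) (hy : Continuous y) (hpy : Function.Periodic y 1)
    (hne : ∀ u w : ℝ, |w| ≤ 1 / 2 → ∫ θ in Ioc (0 : ℝ) 1, pathAt x u w θ ≠ 0) :
    ∃ m R, 0 < m ∧ ∀ᶠ τ : ℝ in 𝓝 0, ∀ u w : ℝ, |w| ≤ 1 / 2 →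
      PinchedPath m R (pathAt (x + τ • y) u w) := by
  obtain ⟨c, hc0, hc⟩ := exists_le_norm_integral_pathAt hx hpx hne
  obtain ⟨A, hA⟩ := exists_norm_le_of_periodic hpx one_ne_zero hx
  obtain ⟨B, hB⟩ := exists_norm_le_of_periodic hpy one_ne_zero hy
  have hsmall : ∀ᶠ τ : ℝ in 𝓝 0, |τ| * B < c / 2 :=
    (show Continuous fun τ : ℝ => |τ| * B by fun_prop).continuousAt.eventually_lt
      continuousAt_const (by simpa using hc0)
  refine ⟨c / 2, A + c / 2, half_pos hc0, hsmall.mono fun τ hτ => ?_⟩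
  have hchord (u w : ℝ) (hw : |w| ≤ 1 / 2) :
      c / 2 ≤ ‖∫ θ in Ioc (0 : ℝ) 1, pathAt (x + τ • y) u w θ‖ := by
    have hyi : ‖∫ θ in Ioc (0 : ℝ) 1, τ • pathAt y u w θ‖ ≤ |τ| * B := by
      rw [integral_smul, norm_smul, Real.norm_eq_abs]
      gcongr
      exact norm_integral_Ioc_zero_one_le fun θ => hB _
    have hadd : ∫ θ in Ioc (0 : ℝ) 1, pathAt (x + τ • y) u w θ =
        (∫ θ in Ioc (0 : ℝ) 1, pathAt x u w θ) + ∫ θ in Ioc (0 : ℝ) 1, τ • pathAt y u w θ :=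
      integral_add (continuous_pathAt hx u w).integrableOn_Ioc
        ((continuous_pathAt hy u w).const_smul τ).integrableOn_Ioc
    rw [hadd]
    linarith [hc u w hw, norm_sub_le_norm_add (∫ θ in Ioc (0 : ℝ) 1, pathAt x u w θ)
      (∫ θ in Ioc (0 : ℝ) 1, τ • pathAt y u w θ)]
  refine fun u w hw => ⟨continuous_pathAt (hx.add (hy.const_smul τ)) u w, fun θ => ?_,
    fun θ => ?_, hchord u w hw⟩
  · exact (hchord (u + w * θ) 0 (by norm_num)).trans_eq (congrArg norm (integral_pathAt_zero _ _))
  · refine (norm_add_le _ _).trans (add_le_add (hA _) ?_)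
    rw [Pi.smul_apply, norm_smul, Real.norm_eq_abs]
    exact (mul_le_mul_of_nonneg_left (hB _) (abs_nonneg τ)).trans hτ.le

theorem PerInjective.eq_zero_of_apply_add_eq {γ : ℝ → Rn n} (hinj : PerInjective γ) {u w : ℝ}
    (hw : |w| ≤ 1 / 2) (h : γ (u + w) = γ u) : w = 0 := by
  obtain ⟨k, hk⟩ := hinj _ _ h.symm
  obtain rfl : w = k := add_left_cancel hk
  have hlt : ((|k| : ℤ) : ℝ) < 1 := by
    rw [Int.cast_abs]
    linarith
  rw [show k = 0 from Int.abs_lt_one_iff.1 (by exact_mod_cast hlt), Int.cast_zero]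

theorem integral_pathAt_deriv_ne_zero {γ : ℝ → Rn n} (hγ : ContDiff ℝ 1 γ)
    (hreg : RegularCurve γ) (hinj : PerInjective γ) (u : ℝ) {w : ℝ} (hw : |w| ≤ 1 / 2) :
    ∫ θ in Ioc (0 : ℝ) 1, pathAt (deriv γ) u w θ ≠ 0 := by
  intro hzero
  have hclosed := sub_eq_smul_integral_pathAt hγ u w
  rw [hzero, smul_zero, sub_eq_zero] at hclosed
  rw [hinj.eq_zero_of_apply_add_eq hw hclosed, integral_pathAt_zero] at hzero
  exact hreg u hzero

end Pinching

section Variation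

variable {E : Type*} [NormedAddCommGroup E] [InnerProductSpace ℝ E] {x y : ℝ → E} {α m R M : ℝ}

theorem ae_cylMeasure : ∀ᵐ p ∂cylMeasure, p.2 ≠ 0 ∧ |p.2| < 1 / 2 := by
  have hmem : ∀ᵐ p ∂cylMeasure, p ∈ Ioc (0 : ℝ) 1 ×ˢ Ioo (-(1 : ℝ) / 2) (1 / 2) := by
    rw [cylMeasure, ← restrict_Ioo_eq_restrict_Icc, Measure.prod_restrict]
    exact ae_restrict_mem (measurableSet_Ioc.prod measurableSet_Ioo)
  have hne : ∀ᵐ p ∂cylMeasure, p.2 ≠ 0 :=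
    Measure.quasiMeasurePreserving_snd.ae (Measure.ae_ne _ 0)
  filter_upwards [hmem, hne] with p hp hp0
  exact ⟨hp0, abs_lt.2 ⟨by linarith [hp.2.1], hp.2.2⟩⟩

instance isFiniteMeasure_cylMeasure : IsFiniteMeasure cylMeasure := by
  rw [cylMeasure]
  infer_instance

theorem measurable_chordArcDensity_pathAt (hx : Continuous x) (s : ℝ) :
    Measurable fun p : ℝ × ℝ => chordArcDensity s (pathAt x p.1 p.2) := by
  have hspeed : Continuous fun p : ℝ × ℝ => ‖pathAt x p.1 p.2 1‖ * ‖pathAt x p.1 p.2 0‖ :=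
    (hx.comp (by fun_prop)).norm.mul (hx.comp (by fun_prop)).norm
  exact hspeed.measurable.mul
    (((continuous_integral_pathAt hx).norm.measurable.pow_const _).sub
      ((continuous_integral_Ioc_zero_one (continuous_pathAt_uncurry hx).norm).measurable.pow_const
        _))

theorem measurable_chordArcDensityDeriv_pathAt (hx : Continuous x) (hy : Continuous y)
    (hne : ∀ u, x u ≠ 0) (s : ℝ) :
    Measurable fun p : ℝ × ℝ => chordArcDensityDeriv s (pathAt x p.1 p.2) (pathAt y p.1 p.2) := by
  have hT := continuous_normalize_comp hx hne
  have hchord := continuous_integral_pathAt hx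
  have harc : Continuous fun p : ℝ × ℝ => ∫ θ in Ioc (0 : ℝ) 1, ‖pathAt x p.1 p.2 θ‖ :=
    continuous_integral_Ioc_zero_one (continuous_pathAt_uncurry hx).norm
  have hinner := hchord.inner (𝕜 := ℝ) (continuous_integral_pathAt hy)
  have harc' : Continuous fun p : ℝ × ℝ => arcDeriv (pathAt x p.1 p.2) (pathAt y p.1 p.2) :=
    continuous_integral_Ioc_zero_one
      ((continuous_pathAt_uncurry hT).inner (continuous_pathAt_uncurry hy))
  have heval {F : Type} [TopologicalSpace F] {f : ℝ → F} (hf : Continuous f) (θ : ℝ) :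
      Continuous fun p : ℝ × ℝ => f (p.1 + p.2 * θ) := hf.comp (by fun_prop)
  have hgap (p : ℝ) := (hchord.norm.measurable.pow_const p).sub (harc.measurable.pow_const p)
  have hends := ((heval (hT.inner hy) 1).mul (heval hx.norm 0)).add
    ((heval hx.norm 1).mul (heval (hT.inner hy) 0))
  exact (hends.measurable.mul (hgap _)).sub
    ((((heval hx.norm 1).mul (heval hx.norm 0)).measurable.const_mul s).mul
      (((hgap _).mul hinner.measurable).add ((harc.measurable.pow_const _).mul
        (hinner.sub (harc.mul harc')).measurable)))

theorem integrable_rpow_mul_sqOsc_pathAt_add_smul (hx : Continuous x) (hy : Continuous y)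
    (hxi : Integrable (fun p : ℝ × ℝ => |p.2| ^ (-α) * sqOsc (pathAt x p.1 p.2)) cylMeasure)
    (hyi : Integrable (fun p : ℝ × ℝ => |p.2| ^ (-α) * sqOsc (pathAt y p.1 p.2)) cylMeasure)
    {τ : ℝ} (hτ : |τ| ≤ 1) :
    Integrable (fun p : ℝ × ℝ => |p.2| ^ (-α) * sqOsc (pathAt (x + τ • y) p.1 p.2))
      cylMeasure := by
  refine ((hxi.add hyi).const_mul 2).mono' ((measurable_abs_snd_rpow _).mul
    (continuous_sqOsc_pathAt (hx.add (hy.const_smul τ))).measurable).aestronglyMeasurable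
    (.of_forall fun p => ?_)
  have hle : sqOsc (pathAt (x + τ • y) p.1 p.2) ≤ _ :=
    sqOsc_add_smul_le (continuous_pathAt hx p.1 p.2) (continuous_pathAt hy p.1 p.2) hτ
  rw [Real.norm_of_nonneg (mul_nonneg (Real.rpow_nonneg (abs_nonneg _) _) (sqOsc_nonneg _))]
  exact (mul_le_mul_of_nonneg_left hle (by positivity)).trans_eq (by
    simp only [Pi.add_apply]
    ring)

variable [CompleteSpace E]

theorem integrable_rpow_mul_chordArcDensity (hx : Continuous x) (hα : 0 ≤ α) (hm : 0 < m)
    (hpin : ∀ u w : ℝ, |w| ≤ 1 / 2 → PinchedPath m R (pathAt x u w))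
    (hxi : Integrable (fun p : ℝ × ℝ => |p.2| ^ (-α) * sqOsc (pathAt x p.1 p.2)) cylMeasure) :
    Integrable (fun p : ℝ × ℝ => |p.2| ^ (-α) * chordArcDensity α (pathAt x p.1 p.2))
      cylMeasure := by
  refine (hxi.const_mul (R * R * (α * m ^ (-α - 1) / (2 * m)))).mono'
    ((measurable_abs_snd_rpow _).mul
      (measurable_chordArcDensity_pathAt hx α)).aestronglyMeasurable ?_
  filter_upwards [ae_cylMeasure] with p hp
  rw [Real.norm_eq_abs, abs_mul, abs_of_nonneg (by positivity : 0 ≤ |p.2| ^ (-α)), mul_left_comm]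
  gcongr
  exact (hpin p.1 p.2 hp.2.le).abs_chordArcDensity_le hm hα

theorem exists_abs_chordArcDensityDeriv_add_smul_le (hm : 0 < m) (hα : 0 ≤ α) (R M : ℝ) :
    ∃ C, ∀ X k : ℝ → E, ∀ τ : ℝ, Continuous X → Continuous k → (∀ θ, ‖k θ‖ ≤ M) → |τ| ≤ 1 →
      PinchedPath m R (X + τ • k) →
        |chordArcDensityDeriv α (X + τ • k) k| ≤ C * (2 * sqOsc X + 3 * sqOsc k) := by
  obtain ⟨C, hC0, hC⟩ := PinchedPath.exists_abs_chordArcDensityDeriv_le (E := E) hm hα R M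
  refine ⟨C, fun X k τ hX hk hkM hτ hpin => ?_⟩
  calc |chordArcDensityDeriv α (X + τ • k) k| ≤ C * (sqOsc (X + τ • k) + sqOsc k) :=
        hC _ _ hpin hk hkM
    _ ≤ C * (2 * (sqOsc X + sqOsc k) + sqOsc k) := by
        gcongr
        exact sqOsc_add_smul_le hX hk hτ
    _ = C * (2 * sqOsc X + 3 * sqOsc k) := by ring

theorem hasDerivAt_integral_chordArcDensity (hx : Continuous x) (hy : Continuous y)
    (hyM : ∀ u, ‖y u‖ ≤ M) (hα : 0 ≤ α) (hm : 0 < m)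
    (hpin : ∀ᶠ τ : ℝ in 𝓝 0, ∀ u w : ℝ, |w| ≤ 1 / 2 → PinchedPath m R (pathAt (x + τ • y) u w))
    (hxi : Integrable (fun p : ℝ × ℝ => |p.2| ^ (-α) * sqOsc (pathAt x p.1 p.2)) cylMeasure)
    (hyi : Integrable (fun p : ℝ × ℝ => |p.2| ^ (-α) * sqOsc (pathAt y p.1 p.2)) cylMeasure) :
    Integrable (fun p : ℝ × ℝ => |p.2| ^ (-α) *
      chordArcDensityDeriv α (pathAt x p.1 p.2) (pathAt y p.1 p.2)) cylMeasure ∧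
    HasDerivAt (fun τ : ℝ => ∫ p : ℝ × ℝ, |p.2| ^ (-α) *
        chordArcDensity α (pathAt (x + τ • y) p.1 p.2) ∂cylMeasure)
      (∫ p : ℝ × ℝ, |p.2| ^ (-α) *
        chordArcDensityDeriv α (pathAt x p.1 p.2) (pathAt y p.1 p.2) ∂cylMeasure) 0 := by
  obtain ⟨C, hC⟩ := exists_abs_chordArcDensityDeriv_add_smul_le (E := E) hm hα R M
  have hpin0 : ∀ u w : ℝ, |w| ≤ 1 / 2 → PinchedPath m R (pathAt x u w) := by
    simpa only [zero_smul, add_zero] using hpin.self_of_nhds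
  have hx0 : x + (0 : ℝ) • y = x := by rw [zero_smul, add_zero]
  have hbound (τ : ℝ) (hτ : |τ| ≤ 1) (p : ℝ × ℝ)
      (hp : PinchedPath m R (pathAt (x + τ • y) p.1 p.2)) :
      ‖|p.2| ^ (-α) * chordArcDensityDeriv α (pathAt (x + τ • y) p.1 p.2) (pathAt y p.1 p.2)‖ ≤
        C * (2 * (|p.2| ^ (-α) * sqOsc (pathAt x p.1 p.2)) +
          3 * (|p.2| ^ (-α) * sqOsc (pathAt y p.1 p.2))) := by
    rw [Real.norm_eq_abs, abs_mul, abs_of_nonneg (by positivity : 0 ≤ |p.2| ^ (-α))]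
    exact (mul_le_mul_of_nonneg_left (hC _ _ τ (continuous_pathAt hx p.1 p.2)
      (continuous_pathAt hy p.1 p.2) (fun θ => hyM _) hτ hp) (by positivity)).trans_eq (by ring)
  have hmeas : Measurable fun p : ℝ × ℝ => |p.2| ^ (-α) *
      chordArcDensityDeriv α (pathAt x p.1 p.2) (pathAt y p.1 p.2) :=
    (measurable_abs_snd_rpow _).mul (measurable_chordArcDensityDeriv_pathAt hx hy (fun u =>
      by simpa [pathAt] using (hpin0 u 0 (by norm_num)).ne_zero hm 0) α)
  have hderiv := hasDerivAt_integral_of_dominated_loc_of_deriv_le (μ := cylMeasure)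
    (F := fun τ (p : ℝ × ℝ) => |p.2| ^ (-α) * chordArcDensity α (pathAt (x + τ • y) p.1 p.2))
    (F' := fun τ (p : ℝ × ℝ) => |p.2| ^ (-α) *
      chordArcDensityDeriv α (pathAt (x + τ • y) p.1 p.2) (pathAt y p.1 p.2))
    (hpin.and (Metric.closedBall_mem_nhds (0 : ℝ) one_pos))
    (.of_forall fun τ => ((measurable_abs_snd_rpow _).mul
      (measurable_chordArcDensity_pathAt (hx.add (hy.const_smul τ)) α)).aestronglyMeasurable)
    (by simpa only [hx0] using integrable_rpow_mul_chordArcDensity hx hα hm hpin0 hxi)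
    (by simpa only [hx0] using hmeas.aestronglyMeasurable)
    (ae_cylMeasure.mono fun p hp τ hτ =>
      hbound τ (by simpa using hτ.2) p (hτ.1 p.1 p.2 hp.2.le))
    (((hxi.const_mul 2).add (hyi.const_mul 3)).const_mul C)
    (ae_cylMeasure.mono fun p hp τ hτ => ((hτ.1 p.1 p.2 hp.2.le).hasDerivAt_chordArcDensity
      (continuous_pathAt hx p.1 p.2) (continuous_pathAt hy p.1 p.2) hm α).const_mul _)
  simpa only [hx0] using hderiv

end Variation

section Energy

variable {η γ h : ℝ → Rn n} {ξ α m R : ℝ}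

theorem ArcLengthParam.regularCurve (h : ArcLengthParam γ) : RegularCurve γ :=
  fun u => norm_ne_zero_iff.1 ((h u).trans_ne one_ne_zero)

theorem integrable_arcCorrection (hη : ContDiff ℝ 1 η) (hα : 0 ≤ α)
    (hξ : ∀ u, |‖deriv η u‖ - 1| ≤ ξ) (hξ' : ξ ≤ 1 / 10) :
    Integrable (fun p : ℝ × ℝ => arcCorrection α η p.1 p.2) cylMeasure := by
  refine (integrable_const (α * (1 / 4) ^ (-α - 1) * (2 * ξ) * 2 * 2)).mono'
    (measurable_arcCorrection hη α).aestronglyMeasurable ?_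
  filter_upwards [ae_cylMeasure] with p hp
  exact abs_arcCorrection_le hη hα hξ hξ' p.1 hp.2.le

theorem ohIntegrand_nonneg (hη : ContDiff ℝ 1 η) (hp : Function.Periodic η 1) (hα : 0 ≤ α)
    (u : ℝ) {w : ℝ} (hw : |w| ≤ 1) (hne : η (u + w) ≠ η u) : 0 ≤ ohIntegrand α η u w := by
  have hpos : 0 < ‖η (u + w) - η u‖ := norm_pos_iff.2 (sub_ne_zero.2 hne)
  refine mul_nonneg (mul_nonneg (sub_nonneg.2 ?_) (norm_nonneg _)) (norm_nonneg _)
  exact one_div_le_one_div_of_le (by positivity)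
    (Real.rpow_le_rpow hpos.le (norm_sub_le_idist hη hp u hw) hα)

theorem oharaER_eq_integral (hη : ContDiff ℝ 1 η) (hp : Function.Periodic η 1) (hα : 0 ≤ α)
    (hm : 0 < m) (hpin : ∀ u w : ℝ, |w| ≤ 1 / 2 → PinchedPath m R (pathAt (deriv η) u w))
    (hint : Integrable (fun p : ℝ × ℝ => ohIntegrand α η p.1 p.2) cylMeasure) :
    oharaER α η = ∫ p : ℝ × ℝ, ohIntegrand α η p.1 p.2 ∂cylMeasure := by
  have hnonneg : 0 ≤ᵐ[cylMeasure] fun p : ℝ × ℝ => ohIntegrand α η p.1 p.2 := by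
    filter_upwards [ae_cylMeasure] with p hp'
    refine ohIntegrand_nonneg hη hp hα p.1 (by linarith [hp'.2]) (sub_ne_zero.1 ?_)
    rw [sub_eq_smul_integral_pathAt hη]
    exact smul_ne_zero hp'.1
      (norm_pos_iff.1 (hm.trans_le (hpin p.1 p.2 hp'.2.le).le_norm_integral))
  rw [integral_eq_lintegral_of_nonneg_ae hnonneg hint.aestronglyMeasurable, cylMeasure,
    lintegral_prod _ hint.aestronglyMeasurable.aemeasurable.ennreal_ofReal,
    ← restrict_Ioo_eq_restrict_Icc]
  rfl

theorem oharaER_eq_integral_add_integral_arcCorrection (hη : ContDiff ℝ 1 η)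
    (hp : Function.Periodic η 1) (hα : 0 ≤ α) (hm : 0 < m)
    (hpin : ∀ u w : ℝ, |w| ≤ 1 / 2 → PinchedPath m R (pathAt (deriv η) u w))
    (hosc : Integrable (fun p : ℝ × ℝ => |p.2| ^ (-α) * sqOsc (pathAt (deriv η) p.1 p.2))
      cylMeasure)
    (hξ : ∀ u, |‖deriv η u‖ - 1| ≤ ξ) (hξ' : ξ ≤ 1 / 10) :
    oharaER α η =
      (∫ p : ℝ × ℝ, |p.2| ^ (-α) * chordArcDensity α (pathAt (deriv η) p.1 p.2) ∂cylMeasure) +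
      ∫ p : ℝ × ℝ, arcCorrection α η p.1 p.2 ∂cylMeasure := by
  have hdensity := integrable_rpow_mul_chordArcDensity (hη.continuous_deriv le_rfl) hα hm hpin hosc
  have hcorr := integrable_arcCorrection hη hα hξ hξ'
  have hsplit : (fun p : ℝ × ℝ => ohIntegrand α η p.1 p.2) =ᵐ[cylMeasure] fun p =>
      |p.2| ^ (-α) * chordArcDensity α (pathAt (deriv η) p.1 p.2) + arcCorrection α η p.1 p.2 := by
    filter_upwards [ae_cylMeasure] with p hp'
    exact ohIntegrand_eq_chordArcDensity_add_arcCorrection hη hp α p.1 (by linarith [hp'.2])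
  rw [oharaER_eq_integral hη hp hα hm hpin ((hdensity.add hcorr).congr hsplit.symm),
    integral_congr_ae hsplit, integral_add hdensity hcorr]

theorem abs_norm_deriv_add_smul_sub_one_le {M : ℝ} (hγ : ContDiff ℝ 1 γ) (hh : ContDiff ℝ 1 h)
    (harc : ArcLengthParam γ) (hM : ∀ u, ‖deriv h u‖ ≤ M) (τ u : ℝ) :
    |‖deriv (γ + τ • h) u‖ - 1| ≤ M * |τ| := by
  rw [deriv_add_const_smul_eq (hγ.differentiable one_ne_zero) (hh.differentiable one_ne_zero),
    ← harc u]
  refine (abs_norm_sub_norm_le _ _).trans ?_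
  rw [Pi.add_apply, Pi.smul_apply, add_sub_cancel_left, norm_smul, Real.norm_eq_abs, mul_comm]
  exact mul_le_mul_of_nonneg_right (hM u) (abs_nonneg τ)

theorem eventually_arcCorrection_add_smul_eq_zero (hγ : ContDiff ℝ 1 γ) (hh : ContDiff ℝ 1 h)
    (hph : Function.Periodic h 1) (harc : ArcLengthParam γ) (α u : ℝ) {w : ℝ} (hw : |w| < 1 / 2) :
    ∀ᶠ τ : ℝ in 𝓝 0, arcCorrection α (γ + τ • h) u w = 0 := by
  obtain ⟨M, hM⟩ := exists_norm_le_of_periodic (periodic_deriv hph) one_ne_zero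
    (hh.continuous_deriv le_rfl)
  have hsmall : ∀ᶠ τ : ℝ in 𝓝 0, 2 * (|w| * (1 + M * |τ|)) < 1 - M * |τ| :=
    (show Continuous fun τ : ℝ => 2 * (|w| * (1 + M * |τ|)) by fun_prop).continuousAt.eventually_lt
      (show Continuous fun τ : ℝ => 1 - M * |τ| by fun_prop).continuousAt
      (by simp only [abs_zero, mul_zero, add_zero, sub_zero]; linarith)
  exact hsmall.mono fun τ hτ => arcCorrection_eq_zero_of_abs_mul_le (hγ.add (hh.const_smul τ))
    (abs_norm_deriv_add_smul_sub_one_le hγ hh harc hM τ) u hτ.le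

theorem hasDerivAt_integral_arcCorrection (hα : 0 ≤ α) (hγ : ContDiff ℝ 1 γ)
    (hh : ContDiff ℝ 1 h) (hph : Function.Periodic h 1) (harc : ArcLengthParam γ) :
    HasDerivAt (fun τ : ℝ => ∫ p : ℝ × ℝ, arcCorrection α (γ + τ • h) p.1 p.2 ∂cylMeasure)
      0 0 := by
  obtain ⟨M, hM⟩ := exists_norm_le_of_periodic (periodic_deriv hph) one_ne_zero
    (hh.continuous_deriv le_rfl)
  have hspeed := abs_norm_deriv_add_smul_sub_one_le hγ hh harc hM
  have hcont (τ : ℝ) : ContDiff ℝ 1 (γ + τ • h) := hγ.add (hh.const_smul τ)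
  have hsmall : ∀ᶠ τ : ℝ in 𝓝 0, M * |τ| < 1 / 10 :=
    (show Continuous fun τ : ℝ => M * |τ| by fun_prop).continuousAt.eventually_lt
      continuousAt_const (by simp)
  have hzero {p : ℝ × ℝ} (hp : |p.2| < 1 / 2) :=
    eventually_arcCorrection_add_smul_eq_zero hγ hh hph harc α p.1 hp
  have hderiv := hasFDerivAt_integral_of_dominated_loc_of_lip' (𝕜 := ℝ) (μ := cylMeasure)
    (F := fun τ (p : ℝ × ℝ) => arcCorrection α (γ + τ • h) p.1 p.2) (F' := 0) (x₀ := 0)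
    (bound := fun _ => α * (1 / 4) ^ (-α - 1) * (2 * M) * 2 * 2) hsmall
    (fun τ _ => (measurable_arcCorrection (hcont τ) α).aestronglyMeasurable)
    (integrable_arcCorrection (hcont 0) hα (hspeed 0) (by simp))
    aestronglyMeasurable_zero
    (by
      filter_upwards [ae_cylMeasure] with p hp τ hτ
      rw [(hzero hp.2).self_of_nhds, sub_zero, sub_zero, Real.norm_eq_abs, Real.norm_eq_abs]
      refine (abs_arcCorrection_le (hcont τ) hα (hspeed τ) hτ.le p.1 hp.2.le).trans_eq ?_
      ring)
    (integrable_const _)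
    (by
      filter_upwards [ae_cylMeasure] with p hp
      exact (hasFDerivAt_const 0 0).congr_of_eventuallyEq (hzero hp.2))
  simpa [HasDerivAt, HasDerivAtFilter, HasFDerivAt] using hderiv.2

theorem hasDirDeriv_of_hasDerivAt {F : (ℝ → Rn n) → ℝ} {d : ℝ}
    (hF : HasDerivAt (fun τ : ℝ => F (γ + τ • h)) d 0) : HasDirDeriv F γ h d := by
  refine (hasDerivAt_iff_tendsto_slope.1 hF).congr fun τ => ?_
  rw [slope_def_field, zero_smul, add_zero, sub_zero]

theorem hasDirDeriv_oharaER (hα : 0 < α) (hγ : MemH1 ((α - 1) / 2) γ)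
    (hinj : PerInjective γ) (harc : ArcLengthParam γ) (hh : MemH1 ((α - 1) / 2) h) :
    Integrable (fun p : ℝ × ℝ => |p.2| ^ (-α) * chordArcDensityDeriv α
      (pathAt (deriv γ) p.1 p.2) (pathAt (deriv h) p.1 p.2)) cylMeasure ∧
    HasDirDeriv (oharaER α) γ h (∫ p : ℝ × ℝ, |p.2| ^ (-α) * chordArcDensityDeriv α
      (pathAt (deriv γ) p.1 p.2) (pathAt (deriv h) p.1 p.2) ∂cylMeasure) := by
  obtain ⟨hγp, hγc, hγg⟩ := hγ
  obtain ⟨hhp, hhc, hhg⟩ := hh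
  have hx := hγc.continuous_deriv le_rfl
  have hy := hhc.continuous_deriv le_rfl
  obtain ⟨m, R, hm, hpin⟩ := exists_eventually_pinchedPath hx (periodic_deriv hγp) hy
    (periodic_deriv hhp) fun u w => integral_pathAt_deriv_ne_zero hγc harc.regularCurve hinj u
  obtain ⟨M, hM⟩ := exists_norm_le_of_periodic (periodic_deriv hhp) one_ne_zero hy
  have hxi := integrable_rpow_mul_sqOsc_pathAt hα hx hγg
  have hyi := integrable_rpow_mul_sqOsc_pathAt hα hy hhg
  have hsmall : ∀ᶠ τ : ℝ in 𝓝 0, M * |τ| < 1 / 10 :=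
    (show Continuous fun τ : ℝ => M * |τ| by fun_prop).continuousAt.eventually_lt
      continuousAt_const (by simp)
  obtain ⟨hint, hmain⟩ := hasDerivAt_integral_chordArcDensity hx hy hM hα.le hm hpin hxi hyi
  have hcorr := hasDerivAt_integral_arcCorrection hα.le hγc hhc hhp harc
  refine ⟨hint, hasDirDeriv_of_hasDerivAt (((hmain.add hcorr).congr_deriv
    (add_zero _)).congr_of_eventuallyEq ?_)⟩
  filter_upwards [hpin, hsmall, Metric.closedBall_mem_nhds (0 : ℝ) one_pos] with τ hpinτ hτ hτ1
  have hderiv := deriv_add_const_smul_eq (hγc.differentiable one_ne_zero)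
    (hhc.differentiable one_ne_zero) τ
  have henergy := oharaER_eq_integral_add_integral_arcCorrection (η := γ + τ • h)
    (hγc.add (hhc.const_smul τ)) (hγp.add (hhp.smul τ)) hα.le hm (by rwa [hderiv])
    (by
      rw [hderiv]
      exact integrable_rpow_mul_sqOsc_pathAt_add_smul hx hy hxi hyi (by simpa using hτ1))
    (abs_norm_deriv_add_smul_sub_one_le hγc hhc harc hM τ) hτ.le
  rw [hderiv] at henergy
  exact henergy

end Energy

section Truncation

variable {ε : ℝ} {f : ℝ × ℝ → ℝ}

theorem Wset_eq_inter (hε : 0 ≤ ε) :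
    Wset ε = Icc (-(1 : ℝ) / 2) (1 / 2) ∩ {w | ε ≤ |w|} := by
  ext w
  simp only [Wset, mem_union, mem_Icc, mem_inter_iff, mem_ofPred_eq, le_abs]
  constructor
  · rintro (⟨hlo, hhi⟩ | ⟨hlo, hhi⟩)
    · exact ⟨⟨hlo, by linarith⟩, .inr (by linarith)⟩
    · exact ⟨⟨by linarith, hhi⟩, .inl hlo⟩
  · rintro ⟨⟨hlo, hhi⟩, hpos | hneg⟩
    · exact .inr ⟨hpos, hhi⟩
    · exact .inl ⟨hlo, by linarith⟩

theorem isCompact_Wset (ε : ℝ) : IsCompact (Wset ε) := isCompact_Icc.union isCompact_Icc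

theorem neg_Wset (ε : ℝ) : -Wset ε = Wset ε := by
  rw [Wset, union_neg, neg_Icc, neg_Icc, neg_neg, union_comm, neg_div, neg_neg]

theorem measurableSet_le_abs_snd (ε : ℝ) : MeasurableSet {p : ℝ × ℝ | ε ≤ |p.2|} :=
  measurableSet_le measurable_const (Continuous.measurable (by fun_prop))

theorem cylMeasure_restrict_le_abs_snd (hε : 0 ≤ ε) :
    cylMeasure.restrict {p | ε ≤ |p.2|} =
      (volume.restrict (Ioc (0 : ℝ) 1)).prod (volume.restrict (Wset ε)) := by
  rw [cylMeasure, Measure.prod_restrict, Measure.prod_restrict,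
    Measure.restrict_restrict (measurableSet_le_abs_snd ε), Wset_eq_inter hε, inter_comm]
  congr 1
  ext p
  exact and_assoc

theorem aecover_cylMeasure :
    AECover cylMeasure (𝓝[>] (0 : ℝ)) fun ε => {p : ℝ × ℝ | ε ≤ |p.2|} where
  ae_eventually_mem := by
    filter_upwards [ae_cylMeasure] with p hp
    exact (eventually_le_nhds (abs_pos.2 hp.1)).filter_mono nhdsWithin_le_nhds
  measurableSet := measurableSet_le_abs_snd

theorem integrable_prod_restrict_Wset (hε : 0 < ε)
    (hf : ContinuousOn f {p | p.2 ≠ 0 ∧ |p.2| ≤ 1 / 2}) :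
    Integrable f ((volume.restrict (Ioc (0 : ℝ) 1)).prod (volume.restrict (Wset ε))) := by
  rw [Measure.prod_restrict]
  refine IntegrableOn.mono_set (ContinuousOn.integrableOn_compact
    (isCompact_Icc.prod (isCompact_Wset ε)) (hf.mono fun p hp => ?_))
    (prod_mono_left Ioc_subset_Icc_self)
  have hw := hp.2
  rw [Wset_eq_inter hε.le] at hw
  exact ⟨abs_pos.1 (hε.trans_le hw.2), abs_le.2 ⟨by linarith [hw.1.1], hw.1.2⟩⟩

theorem setIntegral_eq_zero_of_odd {s : Set ℝ} (hs : -s = s) {k : ℝ → ℝ}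
    (hk : ∀ w, k (-w) = -k w) : ∫ w in s, k w = 0 := by
  have hreflect := (Measure.measurePreserving_neg (volume : Measure ℝ)).setIntegral_preimage_emb
    (MeasurableEquiv.neg ℝ).measurableEmbedding k s
  rw [neg_preimage, hs] at hreflect
  simp only [hk, integral_neg] at hreflect
  linarith

theorem setIntegral_Ioc_comp_add_of_periodic {g : ℝ → ℝ} (hg : Function.Periodic g 1) (a : ℝ) :
    ∫ u in Ioc (0 : ℝ) 1, g (u + a) = ∫ u in Ioc (0 : ℝ) 1, g u := by
  rw [← intervalIntegral.integral_of_le zero_le_one, ← intervalIntegral.integral_of_le zero_le_one,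
    intervalIntegral.integral_comp_add_right, zero_add, add_comm 1 a,
    hg.intervalIntegral_add_eq a 0, zero_add]

end Truncation

section FirstVariation

variable {γ h : ℝ → Rn n} {α ε : ℝ}

/-- The part of the first variation of the O'Hara energy that is odd under exchanging the points
`u` and `u + w`. -/
def fluxTerm (α : ℝ) (γ h : ℝ → Rn n) (u w : ℝ) : ℝ :=
  (⟪deriv γ (u + w), deriv h (u + w)⟫ - ⟪deriv γ u, deriv h u⟫) *
    (1 / ‖γ (u + w) - γ u‖ ^ α - 1 / |w| ^ α)

/-- The deviation, weighted by `|w| ^ (-α)`, of the mean of `⟪γ', h'⟫` between `u` and `u + w` from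
its value at `u`. -/
def meanTerm (α : ℝ) (γ h : ℝ → Rn n) (u w : ℝ) : ℝ :=
  |w| ^ (-α) * ((∫ θ in Ioc (0 : ℝ) 1, pathAt (fun v => ⟪deriv γ v, deriv h v⟫) u w θ) -
    ⟪deriv γ u, deriv h u⟫)

theorem continuous_inner_deriv (hγ : ContDiff ℝ 1 γ) (hh : ContDiff ℝ 1 h) :
    Continuous fun v => ⟪deriv γ v, deriv h v⟫ :=
  (hγ.continuous_deriv le_rfl).inner (hh.continuous_deriv le_rfl)

theorem one_div_norm_sub_rpow_sub (hγ : ContDiff ℝ 1 γ) (s u w : ℝ) :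
    1 / ‖γ (u + w) - γ u‖ ^ s - 1 / |w| ^ s =
      |w| ^ (-s) * (‖∫ θ in Ioc (0 : ℝ) 1, pathAt (deriv γ) u w θ‖ ^ (-s) - 1) := by
  rw [norm_sub_eq_abs_mul hγ, Real.mul_rpow (abs_nonneg _) (norm_nonneg _), one_div, one_div,
    mul_inv, ← Real.rpow_neg (abs_nonneg _), ← Real.rpow_neg (norm_nonneg _), mul_sub, mul_one]

theorem inner_sub_eq_sq_mul (hγ : ContDiff ℝ 1 γ) (hh : ContDiff ℝ 1 h) (u w : ℝ) :
    ⟪γ (u + w) - γ u, h (u + w) - h u⟫ = w ^ 2 * ⟪∫ θ in Ioc (0 : ℝ) 1, pathAt (deriv γ) u w θ,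
      ∫ θ in Ioc (0 : ℝ) 1, pathAt (deriv h) u w θ⟫ := by
  rw [sub_eq_smul_integral_pathAt hγ, sub_eq_smul_integral_pathAt hh, real_inner_smul_left,
    real_inner_smul_right, ← mul_assoc, sq]

theorem sq_mul_abs_rpow_neg_add_two {w : ℝ} (hw : w ≠ 0) (s : ℝ) :
    w ^ 2 * |w| ^ (-(s + 2)) = |w| ^ (-s) := by
  rw [← sq_abs, ← Real.rpow_two, ← Real.rpow_add (abs_pos.2 hw)]
  ring_nf

theorem Rintegrand_eq_rpow_mul (hγ : ContDiff ℝ 1 γ) (hh : ContDiff ℝ 1 h) (α u : ℝ) {w : ℝ}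
    (hw : w ≠ 0) :
    Rintegrand α γ h u w = |w| ^ (-α) *
      (2 * ⟪deriv γ u, deriv h u⟫ *
          (‖∫ θ in Ioc (0 : ℝ) 1, pathAt (deriv γ) u w θ‖ ^ (-α) - 1) -
        α * ⟪∫ θ in Ioc (0 : ℝ) 1, pathAt (deriv γ) u w θ,
            ∫ θ in Ioc (0 : ℝ) 1, pathAt (deriv h) u w θ⟫ *
          (‖∫ θ in Ioc (0 : ℝ) 1, pathAt (deriv γ) u w θ‖ ^ (-(α + 2)) - 1)) := by
  rw [Rintegrand, inner_sub_eq_sq_mul hγ hh, one_div_norm_sub_rpow_sub hγ,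
    one_div_norm_sub_rpow_sub hγ, ← sq_mul_abs_rpow_neg_add_two hw α]
  ring

theorem Qintegrand_eq_rpow_mul (hγ : ContDiff ℝ 1 γ) (hh : ContDiff ℝ 1 h) (α u : ℝ) {w : ℝ}
    (hw : w ≠ 0) :
    Qintegrand α γ h u w = |w| ^ (-α) * (⟪deriv γ u, deriv h u⟫ -
      ⟪∫ θ in Ioc (0 : ℝ) 1, pathAt (deriv γ) u w θ,
        ∫ θ in Ioc (0 : ℝ) 1, pathAt (deriv h) u w θ⟫) := by
  rw [Qintegrand, inner_sub_eq_sq_mul hγ hh, div_eq_mul_inv, div_eq_mul_inv,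
    ← Real.rpow_neg (abs_nonneg _), ← Real.rpow_neg (abs_nonneg _),
    ← sq_mul_abs_rpow_neg_add_two hw α]
  ring

theorem rpow_mul_chordArcDensityDeriv_eq (hγ : ContDiff ℝ 1 γ) (hh : ContDiff ℝ 1 h)
    (harc : ArcLengthParam γ) (α u : ℝ) {w : ℝ} (hw : w ≠ 0) :
    |w| ^ (-α) * chordArcDensityDeriv α (pathAt (deriv γ) u w) (pathAt (deriv h) u w) =
      Rintegrand α γ h u w + α * Qintegrand α γ h u w + fluxTerm α γ h u w +
        α * meanTerm α γ h u w := by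
  rw [chordArcDensityDeriv_of_norm_eq_one (X := pathAt (deriv γ) u w) (fun θ => harc _),
    Rintegrand_eq_rpow_mul hγ hh α u hw, Qintegrand_eq_rpow_mul hγ hh α u hw, fluxTerm, meanTerm,
    one_div_norm_sub_rpow_sub hγ]
  simp only [pathAt, mul_one, mul_zero, add_zero]
  ring

theorem setIntegral_fluxTerm_neg (hγ : Function.Periodic γ 1) (hh : Function.Periodic h 1)
    (α w : ℝ) :
    ∫ u in Ioc (0 : ℝ) 1, fluxTerm α γ h u (-w) = -∫ u in Ioc (0 : ℝ) 1, fluxTerm α γ h u w := by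
  have hper : Function.Periodic (fun u => fluxTerm α γ h u w) 1 := fun u => by
    simp only [fluxTerm, add_right_comm u 1 w, hγ _, periodic_deriv hγ _, periodic_deriv hh _]
  rw [← setIntegral_Ioc_comp_add_of_periodic hper (-w), ← integral_neg]
  congr 1 with u
  simp only [fluxTerm, neg_add_cancel_right, abs_neg]
  rw [norm_sub_rev (γ u)]
  ring

theorem setIntegral_integral_pathAt {g : ℝ → ℝ} (hg : Continuous g) (hp : Function.Periodic g 1)
    (w : ℝ) : ∫ u in Ioc (0 : ℝ) 1, ∫ θ in Ioc (0 : ℝ) 1, pathAt g u w θ =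
      ∫ u in Ioc (0 : ℝ) 1, g u := by
  have hint : Integrable (fun p : ℝ × ℝ => pathAt g p.1 w p.2)
      ((volume.restrict (Ioc (0 : ℝ) 1)).prod (volume.restrict (Ioc (0 : ℝ) 1))) := by
    rw [Measure.prod_restrict]
    exact ((hg.comp (by fun_prop)).continuousOn.integrableOn_compact
      (isCompact_Icc.prod isCompact_Icc)).mono_set
        (prod_mono Ioc_subset_Icc_self Ioc_subset_Icc_self)
  rw [integral_integral_swap hint]
  simp only [pathAt, setIntegral_Ioc_comp_add_of_periodic hp]
  simp

theorem setIntegral_meanTerm (hγ : ContDiff ℝ 1 γ) (hh : ContDiff ℝ 1 h)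
    (hγp : Function.Periodic γ 1) (hhp : Function.Periodic h 1) (α w : ℝ) :
    ∫ u in Ioc (0 : ℝ) 1, meanTerm α γ h u w = 0 := by
  have hg := continuous_inner_deriv hγ hh
  have hgp : Function.Periodic (fun v => ⟪deriv γ v, deriv h v⟫) 1 := fun v => by
    simp only [periodic_deriv hγp v, periodic_deriv hhp v]
  have hmean : Continuous fun u =>
      ∫ θ in Ioc (0 : ℝ) 1, pathAt (fun v => ⟪deriv γ v, deriv h v⟫) u w θ :=
    (continuous_integral_pathAt hg).comp (by fun_prop : Continuous fun u : ℝ => (u, w))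
  simp only [meanTerm]
  rw [integral_const_mul, integral_sub hmean.integrableOn_Ioc hg.integrableOn_Ioc,
    setIntegral_integral_pathAt hg hgp, sub_self, mul_zero]

end FirstVariation

section PrincipalValue

variable {γ h : ℝ → Rn n} {α ε : ℝ}

theorem continuousOn_abs_snd_rpow (s : ℝ) :
    ContinuousOn (fun p : ℝ × ℝ => |p.2| ^ s) {p | p.2 ≠ 0 ∧ |p.2| ≤ 1 / 2} :=
  continuous_snd.abs.continuousOn.rpow_const fun _ hp => .inl (abs_ne_zero.2 hp.1)

theorem continuousOn_fluxTerm (hγ : ContDiff ℝ 1 γ) (hh : ContDiff ℝ 1 h) (hinj : PerInjective γ)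
    (α : ℝ) :
    ContinuousOn (fun p : ℝ × ℝ => fluxTerm α γ h p.1 p.2) {p | p.2 ≠ 0 ∧ |p.2| ≤ 1 / 2} := by
  have hg := continuous_inner_deriv hγ hh
  have hγc := hγ.continuous
  have hchord (p : ℝ × ℝ) (hp : p.2 ≠ 0 ∧ |p.2| ≤ 1 / 2) : ‖γ (p.1 + p.2) - γ p.1‖ ≠ 0 :=
    norm_ne_zero_iff.2 (sub_ne_zero.2 fun heq => hp.1 (hinj.eq_zero_of_apply_add_eq hp.2 heq))
  have hpow : ContinuousOn (fun p : ℝ × ℝ => ‖γ (p.1 + p.2) - γ p.1‖ ^ α)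
      {p | p.2 ≠ 0 ∧ |p.2| ≤ 1 / 2} :=
    (Continuous.continuousOn (by fun_prop)).rpow_const fun p hp => .inl (hchord p hp)
  have hgap : ContinuousOn (fun p : ℝ × ℝ => 1 / ‖γ (p.1 + p.2) - γ p.1‖ ^ α - 1 / |p.2| ^ α)
      {p | p.2 ≠ 0 ∧ |p.2| ≤ 1 / 2} :=
    (continuousOn_const.div hpow fun p hp =>
      (Real.rpow_pos_of_pos ((norm_nonneg _).lt_of_ne' (hchord p hp)) α).ne').sub
    (continuousOn_const.div (continuousOn_abs_snd_rpow α) fun p hp =>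
      (Real.rpow_pos_of_pos (abs_pos.2 hp.1) α).ne')
  exact ((hg.comp (continuous_fst.add continuous_snd)).sub
    (hg.comp continuous_fst)).continuousOn.mul hgap

theorem continuousOn_meanTerm (hγ : ContDiff ℝ 1 γ) (hh : ContDiff ℝ 1 h) (α : ℝ) :
    ContinuousOn (fun p : ℝ × ℝ => meanTerm α γ h p.1 p.2) {p | p.2 ≠ 0 ∧ |p.2| ≤ 1 / 2} := by
  have hg := continuous_inner_deriv hγ hh
  exact (continuousOn_abs_snd_rpow (-α)).mul
    ((continuous_integral_pathAt hg).sub (hg.comp continuous_fst)).continuousOn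

theorem continuousOn_Qintegrand (hγ : ContDiff ℝ 1 γ) (hh : ContDiff ℝ 1 h) (α : ℝ) :
    ContinuousOn (fun p : ℝ × ℝ => Qintegrand α γ h p.1 p.2) {p | p.2 ≠ 0 ∧ |p.2| ≤ 1 / 2} := by
  have hγc := hγ.continuous
  have hhc := hh.continuous
  have hspeed := (continuous_inner_deriv hγ hh).comp (continuous_fst (X := ℝ) (Y := ℝ))
  exact (hspeed.continuousOn.div (continuousOn_abs_snd_rpow α) fun p hp =>
    (Real.rpow_pos_of_pos (abs_pos.2 hp.1) _).ne').sub
    ((Continuous.continuousOn (by fun_prop)).div (continuousOn_abs_snd_rpow (α + 2)) fun p hp =>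
    (Real.rpow_pos_of_pos (abs_pos.2 hp.1) _).ne')

theorem measurable_Rintegrand (hγ : ContDiff ℝ 1 γ) (hh : ContDiff ℝ 1 h) (α : ℝ) :
    Measurable fun p : ℝ × ℝ => Rintegrand α γ h p.1 p.2 := by
  have hγc := hγ.continuous
  have hhc := hh.continuous
  have hgap (s : ℝ) : Measurable fun p : ℝ × ℝ =>
      1 / ‖γ (p.1 + p.2) - γ p.1‖ ^ s - 1 / |p.2| ^ s :=
    (((Continuous.measurable (by fun_prop)).pow_const s).const_div 1).sub
      ((measurable_abs_snd_rpow s).const_div 1)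
  have hspeed := (continuous_inner_deriv hγ hh).comp (continuous_fst (X := ℝ) (Y := ℝ))
  exact ((hspeed.measurable.const_mul 2).mul (hgap α)).sub
    ((Continuous.measurable (by fun_prop)).mul (hgap (α + 2)))

theorem integrable_Rintegrand (hα : 0 < α) (hγ : MemH1 ((α - 1) / 2) γ) (hinj : PerInjective γ)
    (harc : ArcLengthParam γ) (hhp : Function.Periodic h 1) (hh : ContDiff ℝ 1 h) :
    Integrable (fun p : ℝ × ℝ => Rintegrand α γ h p.1 p.2) cylMeasure := by
  obtain ⟨hγp, hγc, hγg⟩ := hγ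
  have hx := hγc.continuous_deriv le_rfl
  have hy := hh.continuous_deriv le_rfl
  obtain ⟨m, R, hm, hpin'⟩ := exists_eventually_pinchedPath hx (periodic_deriv hγp) hy
    (periodic_deriv hhp) fun u w => integral_pathAt_deriv_ne_zero hγc harc.regularCurve hinj u
  have hpin : ∀ u w : ℝ, |w| ≤ 1 / 2 → PinchedPath m R (pathAt (deriv γ) u w) := by
    simpa only [zero_smul, add_zero] using hpin'.self_of_nhds
  obtain ⟨M, hM⟩ := exists_norm_le_of_periodic (periodic_deriv hhp) one_ne_zero hy
  have hM0 : 0 ≤ M := (norm_nonneg _).trans (hM 0)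
  let gap (s : ℝ) : ℝ := s * m ^ (-s - 1) / (2 * m)
  refine ((integrable_rpow_mul_sqOsc_pathAt hα hx hγg).const_mul
    (2 * M * gap α + α * M * gap (α + 2))).mono'
    (measurable_Rintegrand hγc hh α).aestronglyMeasurable ?_
  filter_upwards [ae_cylMeasure] with p hp
  have hinner {a b : Rn n} (ha : ‖a‖ ≤ 1) (hb : ‖b‖ ≤ M) : |⟪a, b⟫| ≤ M :=
    (abs_real_inner_le_norm _ _).trans
      ((mul_le_mul ha hb (norm_nonneg _) zero_le_one).trans_eq (one_mul M))
  have hgap {s : ℝ} (hs : 0 ≤ s) :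
      |‖∫ θ in Ioc (0 : ℝ) 1, pathAt (deriv γ) p.1 p.2 θ‖ ^ (-s) - 1| ≤
        gap s * sqOsc (pathAt (deriv γ) p.1 p.2) := by
    simpa [pathAt, harc _] using
      (hpin p.1 p.2 hp.2.le).abs_rpow_neg_chord_sub_rpow_neg_arc_le hm hs
  rw [Rintegrand_eq_rpow_mul hγc hh α p.1 hp.1, Real.norm_eq_abs, abs_mul,
    abs_of_nonneg (by positivity), mul_left_comm]
  gcongr
  rw [add_mul, mul_assoc _ (gap α), mul_assoc _ (gap (α + 2))]
  refine (abs_sub _ _).trans (add_le_add ?_ ?_)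
  · rw [abs_mul, abs_mul, abs_two]
    gcongr
    exacts [hinner (harc _).le (hM _), hgap hα.le]
  · rw [abs_mul, abs_mul, abs_of_pos hα]
    gcongr
    exacts [hinner (norm_integral_Ioc_zero_one_le fun θ => (harc _).le)
      (norm_integral_Ioc_zero_one_le fun θ => hM _), hgap (by linarith)]

theorem setIntegral_le_abs_snd_fluxTerm_eq_zero (hγ : ContDiff ℝ 1 γ) (hh : ContDiff ℝ 1 h)
    (hγp : Function.Periodic γ 1) (hhp : Function.Periodic h 1) (hinj : PerInjective γ) (α : ℝ)
    (hε : 0 < ε) : ∫ p in {p : ℝ × ℝ | ε ≤ |p.2|}, fluxTerm α γ h p.1 p.2 ∂cylMeasure = 0 := by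
  rw [cylMeasure_restrict_le_abs_snd hε.le,
    integral_prod_symm _ (integrable_prod_restrict_Wset hε (continuousOn_fluxTerm hγ hh hinj α))]
  exact setIntegral_eq_zero_of_odd (neg_Wset ε) (setIntegral_fluxTerm_neg hγp hhp α)

theorem setIntegral_le_abs_snd_meanTerm_eq_zero (hγ : ContDiff ℝ 1 γ) (hh : ContDiff ℝ 1 h)
    (hγp : Function.Periodic γ 1) (hhp : Function.Periodic h 1) (α : ℝ) (hε : 0 < ε) :
    ∫ p in {p : ℝ × ℝ | ε ≤ |p.2|}, meanTerm α γ h p.1 p.2 ∂cylMeasure = 0 := by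
  rw [cylMeasure_restrict_le_abs_snd hε.le,
    integral_prod_symm _ (integrable_prod_restrict_Wset hε (continuousOn_meanTerm hγ hh α))]
  simp only [setIntegral_meanTerm hγ hh hγp hhp, integral_zero]

theorem integrableOn_le_abs_snd {f : ℝ × ℝ → ℝ} (hε : 0 < ε)
    (hf : ContinuousOn f {p | p.2 ≠ 0 ∧ |p.2| ≤ 1 / 2}) :
    IntegrableOn f {p | ε ≤ |p.2|} cylMeasure := by
  rw [IntegrableOn, cylMeasure_restrict_le_abs_snd hε.le]
  exact integrable_prod_restrict_Wset hε hf

theorem integral_Wset_Qintegrand_eq (hγ : ContDiff ℝ 1 γ) (hh : ContDiff ℝ 1 h) (α : ℝ)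
    (hε : 0 < ε) : ∫ u in Ioc (0 : ℝ) 1, ∫ w in Wset ε, Qintegrand α γ h u w =
      ∫ p in {p : ℝ × ℝ | ε ≤ |p.2|}, Qintegrand α γ h p.1 p.2 ∂cylMeasure := by
  rw [cylMeasure_restrict_le_abs_snd hε.le]
  exact (integral_prod _ (integrable_prod_restrict_Wset hε (continuousOn_Qintegrand hγ hh α))).symm

theorem mul_integral_Wset_Qintegrand_eq (hγ : ContDiff ℝ 1 γ) (hh : ContDiff ℝ 1 h)
    (hγp : Function.Periodic γ 1) (hhp : Function.Periodic h 1) (hinj : PerInjective γ)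
    (harc : ArcLengthParam γ)
    (hR : Integrable (fun p : ℝ × ℝ => Rintegrand α γ h p.1 p.2) cylMeasure) (hε : 0 < ε) :
    α * ∫ u in Ioc (0 : ℝ) 1, ∫ w in Wset ε, Qintegrand α γ h u w =
      (∫ p in {p : ℝ × ℝ | ε ≤ |p.2|}, |p.2| ^ (-α) * chordArcDensityDeriv α
        (pathAt (deriv γ) p.1 p.2) (pathAt (deriv h) p.1 p.2) ∂cylMeasure) -
      ∫ p in {p : ℝ × ℝ | ε ≤ |p.2|}, Rintegrand α γ h p.1 p.2 ∂cylMeasure := by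
  have hQ := (integrableOn_le_abs_snd hε (continuousOn_Qintegrand hγ hh α)).integrable.const_mul α
  have hRQ := hR.integrableOn.integrable.fun_add hQ
  have hflux := (integrableOn_le_abs_snd hε (continuousOn_fluxTerm hγ hh hinj α)).integrable
  have hmean :=
    (integrableOn_le_abs_snd hε (continuousOn_meanTerm hγ hh α)).integrable.const_mul α
  have hdecomp : ∀ᵐ p ∂cylMeasure.restrict {p | ε ≤ |p.2|}, |p.2| ^ (-α) * chordArcDensityDeriv α
      (pathAt (deriv γ) p.1 p.2) (pathAt (deriv h) p.1 p.2) = Rintegrand α γ h p.1 p.2 +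
        α * Qintegrand α γ h p.1 p.2 + fluxTerm α γ h p.1 p.2 + α * meanTerm α γ h p.1 p.2 := by
    filter_upwards [ae_restrict_of_ae ae_cylMeasure] with p hp
    exact rpow_mul_chordArcDensityDeriv_eq hγ hh harc α p.1 hp.1
  rw [integral_Wset_Qintegrand_eq hγ hh α hε, integral_congr_ae hdecomp,
    integral_add (hRQ.fun_add hflux) hmean, integral_add hRQ hflux,
    integral_add hR.integrableOn hQ, integral_const_mul, integral_const_mul,
    setIntegral_le_abs_snd_fluxTerm_eq_zero hγ hh hγp hhp hinj α hε,
    setIntegral_le_abs_snd_meanTerm_eq_zero hγ hh hγp hhp α hε]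
  ring

theorem tendsto_setIntegral_le_abs_snd {f : ℝ × ℝ → ℝ} (hf : Integrable f cylMeasure) :
    Tendsto (fun ε : ℝ => ∫ p in {p : ℝ × ℝ | ε ≤ |p.2|}, f p ∂cylMeasure) (𝓝[>] 0)
      (𝓝 (∫ p, f p ∂cylMeasure)) :=
  aecover_cylMeasure.integral_tendsto_of_countably_generated hf

theorem cylMeasure_eq_restrict :
    cylMeasure = volume.restrict (Ioc (0 : ℝ) 1 ×ˢ Icc (-(1 : ℝ) / 2) (1 / 2)) :=
  Measure.prod_restrict _ _

end PrincipalValue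

theorem statement10_general {α : ℝ} (hα : 0 < α) {γ : ℝ → Rn n} (hγ : MemH1 ((α - 1) / 2) γ)
    (hinj : PerInjective γ) (harc : ArcLengthParam γ) {h : ℝ → Rn n}
    (hh : MemH1 ((α - 1) / 2) h) :
    IntegrableOn (fun p : ℝ × ℝ => Rintegrand α γ h p.1 p.2)
      ((Ioc (0 : ℝ) 1) ×ˢ (Icc (-(1 : ℝ) / 2) (1 / 2))) volume ∧
    ∃ Qv : ℝ,
      Tendsto (fun ε : ℝ => ∫ u in Ioc (0 : ℝ) 1, ∫ w in Wset ε, Qintegrand α γ h u w)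
        (𝓝[>] (0 : ℝ)) (𝓝 Qv) ∧
      HasDirDeriv (oharaER α) γ h (α * Qv + Rval α γ h) := by
  have hR := integrable_Rintegrand hα hγ hinj harc hh.1 hh.2.1
  obtain ⟨hD, hderiv⟩ := hasDirDeriv_oharaER hα hγ hinj harc hh
  rw [Rval, IntegrableOn, ← cylMeasure_eq_restrict]
  refine ⟨hR, _, ?_, by rwa [mul_div_cancel₀ _ hα.ne', sub_add_cancel]⟩
  refine (((tendsto_setIntegral_le_abs_snd hD).sub
    (tendsto_setIntegral_le_abs_snd hR)).div_const α).congr' ?_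
  filter_upwards [self_mem_nhdsWithin] with ε hε
  rw [← mul_integral_Wset_Qintegrand_eq hγ.2.1 hh.2.1 hγ.1 hh.1 hinj harc hR hε,
    mul_div_cancel_left₀ _ hα.ne']

/-- For an injective arc-length curve `γ ∈ H^{(1+α)/2,2}` and a direction
`h ∈ H^{(1+α)/2,2}`: the double integral defining `R(γ,h)` converges absolutely, the
principal value `Q(γ,h)` exists, and `δE^α(γ;h) = α·Q(γ,h) + R(γ,h)`. -/
theorem statement10 {n : ℕ} (hn : 2 ≤ n) {α : ℝ} (hα : α ∈ Ioo (2:ℝ) 3)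
    {γ : ℝ → Rn n} (hγ : MemH1 ((α - 1) / 2) γ) (hinj : PerInjective γ)
    (harc : ArcLengthParam γ) {h : ℝ → Rn n} (hh : MemH1 ((α - 1) / 2) h) :
    IntegrableOn (fun p : ℝ × ℝ => Rintegrand α γ h p.1 p.2)
      ((Ioc (0:ℝ) 1) ×ˢ (Icc (-(1:ℝ)/2) (1/2))) volume ∧
    ∃ Qv : ℝ,
      Tendsto (fun ε : ℝ => ∫ u in Ioc (0:ℝ) 1, ∫ w in Wset ε, Qintegrand α γ h u w)
        (𝓝[>] (0:ℝ)) (𝓝 Qv) ∧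
      HasDirDeriv (oharaER α) γ h (α * Qv + Rval α γ h) :=
  statement10_general (by linarith [hα.1]) hγ hinj harc hh

end
end

section
/- Let α ∈ (2,3) and n ≥ 2. There exists a sequence of real numbers (q_k)_{k∈ℤ} converging to a positive constant as |k| → ∞ such that for all γ, h ∈ H^{(α+1)/2,2}(ℝ/ℤ,ℝⁿ) the principal value Q(γ,h) exists, the series Σ_{k∈ℤ} q_k·|k|^{α+1}·⟨γ̂(k), ĥ(k)⟩_{ℂⁿ} converges absolutely, and Q(γ,h) = Σ_{k∈ℤ} q_k·|k|^{α+1}·⟨γ̂(k), ĥ(k)⟩_{ℂⁿ}. -/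
open MeasureTheory Filter Set
open scoped RealInnerProductSpace ENNReal Topology

noncomputable section

variable {n : ℕ}

/-!
For fixed `w ≠ 0`, Parseval's identity in `u` turns `∫ Qintegrand α γ h u w du` into
`∑ₖ |2πk|^{α+2} K(2πkw) ⟨γ̂(k), ĥ(k)⟩` with the nonnegative kernel
`K(t) = (t² - |e^{it} - 1|²) / |t|^{α+2}`. Integrating in `w` and substituting `t = 2πkw` leaves
`|2πk|^{α+1}` times the integral of `K` over `[-π|k|, π|k|]`. Since the numerator of `K` is `O(t⁴)`
at `0` and `O(t²)` at infinity, `K` is integrable exactly for `1 < α < 3`, so these integrals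
converge to `∫ K > 0`. Parseval also shows that the Gagliardo seminorm of `γ'` controls
`∑ₖ |k|^{α+1} |γ̂(k)|²`, because a shift by `|w| ~ 1 / |k|` moves the `k`-th mode by an amount
comparable to its size. This dominates the series, hence sum and `w`-integral can be exchanged, and
the principal value is an absolutely convergent integral of the `u`-average.
-/

open scoped Real

section FourierCoeffOn

variable {a b : ℝ} {E : Type*} [NormedAddCommGroup E] [NormedSpace ℂ E]

lemma hasSum_fourierCoeff_mul_star {T : ℝ} [Fact (0 < T)]
    (f g : Lp ℂ 2 (AddCircle.haarAddCircle (T := T))) :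
    HasSum (fun k => fourierCoeff f k * star (fourierCoeff g k))
      (∫ t, f t * star (g t) ∂AddCircle.haarAddCircle) := by
  have parseval := (fourierBasis (T := T)).hasSum_inner_mul_inner g f
  simpa only [← inner_conj_symm g (fourierBasis _), ← HilbertBasis.repr_apply_apply,
    fourierBasis_repr, L2.inner_def, RCLike.inner_apply, starRingEnd_apply,
    mul_comm (star (fourierCoeff _ _))] using parseval

lemma hasSum_fourierCoeffOn_mul_star (hab : a < b) {f g : ℝ → ℂ}
    (hf : MemLp f 2 (volume.restrict (Ioc a b))) (hg : MemLp g 2 (volume.restrict (Ioc a b))) :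
    HasSum (fun k => fourierCoeffOn hab f k * star (fourierCoeffOn hab g k))
      ((b - a)⁻¹ • ∫ x in a..b, f x * star (g x)) := by
  have := Fact.mk (sub_pos.mpr hab)
  rw [← add_sub_cancel a b] at hf hg
  have hf' := hf.memLp_liftIoc.haarAddCircle
  have hg' := hg.memLp_liftIoc.haarAddCircle
  convert hasSum_fourierCoeff_mul_star hf'.toLp hg'.toLp using 1
  · funext k
    rw [fourierCoeff_congr_ae hf'.coeFn_toLp, fourierCoeff_congr_ae hg'.coeFn_toLp]
    rfl
  · nth_rw 2 [← add_sub_cancel a b]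
    rw [← AddCircle.integral_liftIoc_eq_intervalIntegral, ← AddCircle.integral_haarAddCircle]
    refine integral_congr_ae ?_
    filter_upwards [hf'.coeFn_toLp, hg'.coeFn_toLp] with x hfx hgx
    rw [hfx, hgx]
    rfl

lemma continuous_fourier_coe (T : ℝ) (k : ℤ) :
    Continuous fun x : ℝ => fourier k (x : AddCircle T) :=
  (fourier k).continuous.comp (AddCircle.continuous_mk' T)

lemma fourierCoeffOn_sub (hab : a < b) {f g : ℝ → E} (hf : IntervalIntegrable f volume a b)
    (hg : IntervalIntegrable g volume a b) (k : ℤ) :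
    fourierCoeffOn hab (fun x => f x - g x) k =
      fourierCoeffOn hab f k - fourierCoeffOn hab g k := by
  have hcont : ContinuousOn (fun x : ℝ => fourier (-k) (x : AddCircle (b - a))) (uIcc a b) :=
    (continuous_fourier_coe _ _).continuousOn
  simp only [fourierCoeffOn_eq_integral, smul_sub]
  rw [intervalIntegral.integral_sub (hf.continuousOn_smul hcont) (hg.continuousOn_smul hcont),
    smul_sub]

lemma fourierCoeffOn_comp_add_right (hab : a < b) {f : ℝ → E} (hf : Function.Periodic f (b - a))
    (w : ℝ) (k : ℤ) :
    fourierCoeffOn hab (fun x => f (x + w)) k =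
      fourier k (w : AddCircle (b - a)) • fourierCoeffOn hab f k := by
  set F : ℝ → E := fun x => fourier (-k) (x : AddCircle (b - a)) • f x with hF
  have hper : Function.Periodic F (b - a) := fun x => by
    simp only [hF, hf x, AddCircle.coe_add_period]
  have hshift : ∀ x : ℝ, fourier (-k) (x : AddCircle (b - a)) • f (x + w) =
      fourier k (w : AddCircle (b - a)) • F (x + w) := fun x => by
    rw [hF, smul_smul, AddCircle.coe_add]
    simp only [fourier_apply, ← Circle.coe_mul, ← AddCircle.toCircle_add]
    congr 3
    module
  have hint : ∫ x in a..b, F (x + w) = ∫ x in a..b, F x := by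
    have h := hper.intervalIntegral_add_eq (a + w) a
    rw [intervalIntegral.integral_comp_add_right]
    convert h using 2 <;> ring
  simp only [fourierCoeffOn_eq_integral, hshift, intervalIntegral.integral_smul, hint]
  rw [smul_comm]

lemma fourierCoeffOn_deriv_of_eq_endpoints (hab : a < b) {f f' : ℝ → ℂ}
    (hf : ∀ x ∈ uIcc a b, HasDerivAt f (f' x) x) (hf' : IntervalIntegrable f' volume a b)
    (hend : f a = f b) (k : ℤ) :
    fourierCoeffOn hab f' k = 2 * π * Complex.I * k / (b - a) * fourierCoeffOn hab f k := by
  rcases eq_or_ne k 0 with rfl | hk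
  · simp [fourierCoeffOn_eq_integral, intervalIntegral.integral_eq_sub_of_hasDerivAt hf hf', hend]
  · have hba : (b - a : ℂ) ≠ 0 := by exact_mod_cast (sub_pos.mpr hab).ne'
    have hk' : (k : ℂ) ≠ 0 := by exact_mod_cast hk
    rw [fourierCoeffOn_of_hasDerivAt hab hk hf hf', hend]
    have := Complex.I_ne_zero
    have : (π : ℂ) ≠ 0 := by exact_mod_cast Real.pi_ne_zero
    field_simp
    ring

end FourierCoeffOn

section Curves

lemma fCoef_eq_fourierCoeffOn (γ : ℝ → Rn n) (k : ℤ) (j : Fin n) :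
    fCoef γ k j = fourierCoeffOn zero_lt_one (fun u => (γ u j : ℂ)) k := by
  rw [fCoef, fourierCoeffOn_eq_integral, sub_zero, div_one, one_smul]
  refine intervalIntegral.integral_congr fun u _ => ?_
  simp only [fourier_coe_apply, smul_eq_mul, mul_comm (γ u j : ℂ)]
  congr 2
  push_cast
  ring

lemma fCoef_deriv {γ : ℝ → Rn n} (hγ : ContDiff ℝ 1 γ) (hend : γ 0 = γ 1) (k : ℤ)
    (j : Fin n) : fCoef (deriv γ) k j = 2 * π * Complex.I * k * fCoef γ k j := by
  have hderiv : ∀ u, HasDerivAt (fun u => (γ u j : ℂ)) (deriv γ u j : ℂ) u := fun u =>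
    ((EuclideanSpace.proj (𝕜 := ℝ) j).hasFDerivAt.comp_hasDerivAt u
      (hγ.differentiable one_ne_zero u).hasDerivAt).ofReal_comp
  have := hγ.continuous_deriv_one
  rw [fCoef_eq_fourierCoeffOn, fCoef_eq_fourierCoeffOn,
    fourierCoeffOn_deriv_of_eq_endpoints zero_lt_one (fun u _ => hderiv u)
      (Continuous.intervalIntegrable (by fun_prop) _ _) (by rw [hend])]
  simp

lemma fCoef_comp_add_sub {γ : ℝ → Rn n} (hγ : Continuous γ) (hp : Function.Periodic γ 1) (w : ℝ)
    (k : ℤ) (j : Fin n) : fCoef (fun u => γ (u + w) - γ u) k j =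
      (Complex.exp ((2 * π * k * w : ℝ) * Complex.I) - 1) * fCoef γ k j := by
  have hper : Function.Periodic (fun u => (γ u j : ℂ)) (1 - 0) := fun u => by
    simp only [sub_zero, hp u]
  simp only [fCoef_eq_fourierCoeffOn, PiLp.sub_apply, Complex.ofReal_sub]
  rw [fourierCoeffOn_sub _ (Continuous.intervalIntegrable (by fun_prop) _ _)
      (Continuous.intervalIntegrable (by fun_prop) _ _),
    fourierCoeffOn_comp_add_right zero_lt_one hper, fourier_coe_apply, sub_mul, one_mul,
    smul_eq_mul]
  congr 3
  push_cast
  ring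

/-- The Hermitian product `⟨γ̂(k), ĥ(k)⟩` in `ℂⁿ` of the `k`-th Fourier coefficients. -/
def coefInner (γ h : ℝ → Rn n) (k : ℤ) : ℂ := ∑ j, fCoef γ k j * star (fCoef h k j)

/-- The squared norm `|γ̂(k)|²` in `ℂⁿ` of the `k`-th Fourier coefficient. -/
def coefNormSq (γ : ℝ → Rn n) (k : ℤ) : ℝ := ∑ j, ‖fCoef γ k j‖ ^ 2

lemma coefNormSq_nonneg (γ : ℝ → Rn n) (k : ℤ) : 0 ≤ coefNormSq γ k :=
  Finset.sum_nonneg fun _ _ => sq_nonneg _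

lemma coefInner_self (γ : ℝ → Rn n) (k : ℤ) : coefInner γ γ k = coefNormSq γ k := by
  simp only [coefInner, coefNormSq, Complex.star_def, Complex.mul_conj', Complex.ofReal_sum,
    Complex.ofReal_pow]

lemma norm_coefInner_le (γ h : ℝ → Rn n) (k : ℤ) :
    ‖coefInner γ h k‖ ≤ (coefNormSq γ k + coefNormSq h k) / 2 := by
  rw [coefNormSq, coefNormSq, ← Finset.sum_add_distrib, Finset.sum_div]
  refine (norm_sum_le _ _).trans (Finset.sum_le_sum fun j _ => ?_)
  rw [norm_mul, norm_star]
  linarith [two_mul_le_add_sq ‖fCoef γ k j‖ ‖fCoef h k j‖]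

lemma memLp_ofReal_apply {X : Type*} [MeasurableSpace X] {μ : Measure X} {p : ℝ≥0∞} {f : X → Rn n}
    (hf : MemLp f p μ) (j : Fin n) : MemLp (fun x => (f x j : ℂ)) p μ :=
  ((EuclideanSpace.proj (𝕜 := ℝ) j).comp_memLp' hf).ofReal

lemma hasSum_coefInner {F G : ℝ → Rn n} (hF : MemLp F 2 (volume.restrict (Ioc 0 1)))
    (hG : MemLp G 2 (volume.restrict (Ioc 0 1))) :
    HasSum (coefInner F G) ((∫ u in Ioc (0 : ℝ) 1, ⟪F u, G u⟫ : ℝ) : ℂ) := by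
  have hsum : HasSum (coefInner F G) (∑ j, ∫ u in (0 : ℝ)..1, (F u j : ℂ) * star (G u j : ℂ)) := by
    refine hasSum_sum fun j _ => ?_
    have h := hasSum_fourierCoeffOn_mul_star zero_lt_one (memLp_ofReal_apply hF j)
      (memLp_ofReal_apply hG j)
    simpa only [← fCoef_eq_fourierCoeffOn, sub_zero, inv_one, one_smul] using h
  have hint : ∀ j, IntegrableOn (fun u => (F u j : ℂ) * star (G u j : ℂ)) (Ioc 0 1) := fun j =>
    (memLp_ofReal_apply hF j).integrable_mul (memLp_ofReal_apply hG j).star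
  convert hsum using 1
  simp only [intervalIntegral.integral_of_le zero_le_one]
  rw [← integral_finsetSum _ fun j _ => hint j, ← integral_complex_ofReal]
  refine integral_congr_ae (.of_forall fun u => ?_)
  simp [PiLp.inner_apply, mul_comm]

lemma memLp_Ioc_of_continuous {E : Type*} [NormedAddCommGroup E] {f : ℝ → E} (hf : Continuous f)
    (p : ℝ≥0∞) (a b : ℝ) : MemLp f p (volume.restrict (Ioc a b)) := by
  obtain ⟨C, hC⟩ := isCompact_Icc.exists_bound_of_continuousOn (s := Icc a b) hf.continuousOn
  refine MemLp.of_bound hf.aestronglyMeasurable C ?_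
  filter_upwards [ae_restrict_mem measurableSet_Ioc] with x hx
  exact hC x (Ioc_subset_Icc_self hx)

lemma hasSum_coefInner_of_continuous {F G : ℝ → Rn n} (hF : Continuous F) (hG : Continuous G) :
    HasSum (coefInner F G) ((∫ u in Ioc (0 : ℝ) 1, ⟪F u, G u⟫ : ℝ) : ℂ) :=
  hasSum_coefInner (memLp_Ioc_of_continuous hF 2 0 1) (memLp_Ioc_of_continuous hG 2 0 1)

lemma coefInner_deriv {γ h : ℝ → Rn n} (hγ : ContDiff ℝ 1 γ) (hh : ContDiff ℝ 1 h)
    (hγend : γ 0 = γ 1) (hhend : h 0 = h 1) (k : ℤ) :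
    coefInner (deriv γ) (deriv h) k = ((2 * π * k) ^ 2 : ℝ) * coefInner γ h k := by
  rw [coefInner, coefInner, Finset.mul_sum]
  refine Finset.sum_congr rfl fun j _ => ?_
  rw [fCoef_deriv hγ hγend, fCoef_deriv hh hhend]
  have hsymbol : 2 * π * Complex.I * k * star (2 * π * Complex.I * k : ℂ) =
      ((2 * π * k) ^ 2 : ℝ) := by
    simp only [Complex.star_def, map_mul, map_ofNat, Complex.conj_ofReal, Complex.conj_I,
      map_intCast]
    push_cast
    linear_combination -(4 * π ^ 2 * k ^ 2 : ℂ) * Complex.I_mul_I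
  rw [← hsymbol, star_mul]
  ring

lemma exp_mul_I_sub_one_mul_star (x : ℝ) :
    (Complex.exp (x * Complex.I) - 1) * star (Complex.exp (x * Complex.I) - 1) =
      (2 - 2 * Real.cos x : ℝ) := by
  rw [Complex.star_def, Complex.mul_conj, Complex.normSq_apply]
  simp only [Complex.sub_re, Complex.exp_ofReal_mul_I_re, Complex.one_re, Complex.sub_im,
    Complex.exp_ofReal_mul_I_im, Complex.one_im]
  congr 1
  linear_combination Real.sin_sq_add_cos_sq x

lemma coefInner_comp_add_sub {γ h : ℝ → Rn n} (hγ : Continuous γ) (hh : Continuous h)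
    (hγp : Function.Periodic γ 1) (hhp : Function.Periodic h 1) (w : ℝ) (k : ℤ) :
    coefInner (fun u => γ (u + w) - γ u) (fun u => h (u + w) - h u) k =
      (2 - 2 * Real.cos (2 * π * k * w) : ℝ) * coefInner γ h k := by
  rw [coefInner, coefInner, Finset.mul_sum]
  refine Finset.sum_congr rfl fun j _ => ?_
  rw [fCoef_comp_add_sub hγ hγp, fCoef_comp_add_sub hh hhp, ← exp_mul_I_sub_one_mul_star, star_mul]
  ring

end Curves

section Kernel

variable {α : ℝ}

/-- The kernel `(t² - |e^{it} - 1|²) / |t|^{α+2}`, with `|e^{it} - 1|²` written as `2 - 2 cos t`.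
Rescaled to the frequency `2πk`, it is the Fourier symbol of `w ↦ ∫ Qintegrand α γ h u w du`. -/
def qKernel (α t : ℝ) : ℝ := (t ^ 2 - (2 - 2 * Real.cos t)) / |t| ^ (α + 2)

lemma qKernel_nonneg (α t : ℝ) : 0 ≤ qKernel α t :=
  div_nonneg (by linarith [Real.one_sub_sq_div_two_le_cos (x := t)]) (by positivity)

lemma qKernel_pos (α : ℝ) {t : ℝ} (ht : t ≠ 0) : 0 < qKernel α t :=
  div_pos (by linarith [Real.one_sub_sq_div_two_lt_cos ht]) (by positivity)

lemma qKernel_abs (α t : ℝ) : qKernel α |t| = qKernel α t := by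
  simp only [qKernel, sq_abs, Real.cos_abs, abs_abs]

lemma sq_sub_two_sub_two_mul_cos_isBigO_atTop :
    (fun t : ℝ => t ^ 2 - (2 - 2 * Real.cos t)) =O[atTop] fun t => t ^ 2 :=
  .of_norm_le fun t => by
    rw [Real.norm_of_nonneg (by linarith [Real.one_sub_sq_div_two_le_cos (x := t)])]
    linarith [Real.cos_le_one t]

lemma sq_sub_two_sub_two_mul_cos_isBigO_nhds_zero :
    (fun t : ℝ => t ^ 2 - (2 - 2 * Real.cos t)) =O[𝓝 0] fun t => t ^ 4 := by
  refine .of_norm_eventuallyLE ?_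
  filter_upwards [Metric.closedBall_mem_nhds (0 : ℝ) one_pos] with t ht
  rw [Real.norm_of_nonneg (by linarith [Real.one_sub_sq_div_two_le_cos (x := t)])]
  have hcos := (abs_le.mp (Real.cos_bound (x := t) (by simpa using ht))).2
  have : 0 ≤ t ^ 4 := by positivity
  rw [(by decide : Even 4).pow_abs] at hcos
  linarith

lemma integrableOn_Ioi_qKernel (hα : α ∈ Ioo (1 : ℝ) 3) : IntegrableOn (qKernel α) (Ioi 0) := by
  have hmellin : IntegrableOn
      (fun t : ℝ => t ^ (-α - 1 - 1) * (t ^ 2 - (2 - 2 * Real.cos t))) (Ioi 0) := by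
    refine mellin_convergent_of_isBigO_scalar (a := -2) (b := -4)
      ((by fun_prop : Continuous _).locallyIntegrable.locallyIntegrableOn _) ?_
      (by linarith [hα.1]) ?_ (by linarith [hα.2])
    · simpa using sq_sub_two_sub_two_mul_cos_isBigO_atTop
    · simpa using sq_sub_two_sub_two_mul_cos_isBigO_nhds_zero.mono nhdsWithin_le_nhds
  refine hmellin.congr_fun (fun t (ht : 0 < t) => ?_) measurableSet_Ioi
  rw [qKernel, abs_of_pos ht, div_eq_inv_mul, ← Real.rpow_neg ht.le]
  ring_nf

lemma integrable_qKernel (hα : α ∈ Ioo (1 : ℝ) 3) : Integrable (qKernel α) := by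
  have h := (integrable_fun_norm_addHaar (volume : Measure ℝ) (f := qKernel α)).mpr
    (by simpa using integrableOn_Ioi_qKernel hα)
  simpa only [Real.norm_eq_abs, qKernel_abs] using h

lemma integral_qKernel_pos (hα : α ∈ Ioo (1 : ℝ) 3) : 0 < ∫ t, qKernel α t := by
  rw [integral_pos_iff_support_of_nonneg (qKernel_nonneg α) (integrable_qKernel hα)]
  have hsub : Ioi (0 : ℝ) ⊆ Function.support (qKernel α) := fun t ht =>
    (qKernel_pos α (ne_of_gt ht)).ne'
  exact lt_of_lt_of_le (by simp) (measure_mono hsub)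

lemma abs_rpow_mul_qKernel (α c : ℝ) {w : ℝ} (hw : w ≠ 0) :
    |c| ^ (α + 2) * qKernel α (c * w) =
      c ^ 2 / |w| ^ α - (2 - 2 * Real.cos (c * w)) / |w| ^ (α + 2) := by
  rcases eq_or_ne c 0 with rfl | hc
  · simp [qKernel]
  · have hc' : |c| ^ (α + 2) ≠ 0 := by positivity
    rw [qKernel, abs_mul, Real.mul_rpow (abs_nonneg c) (abs_nonneg w), mul_div_assoc',
      mul_div_mul_left _ _ hc', sub_div, Real.rpow_add (abs_pos.mpr hw), Real.rpow_two, sq_abs,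
      mul_pow, mul_div_mul_right _ _ (pow_ne_zero 2 hw)]

lemma integrable_abs_rpow_mul_qKernel (hα : α ∈ Ioo (1 : ℝ) 3) (c : ℝ) :
    Integrable fun w => |c| ^ (α + 2) * qKernel α (c * w) := by
  rcases eq_or_ne c 0 with rfl | hc
  · simp [qKernel]
  · exact ((integrable_qKernel hα).comp_mul_left' hc).const_mul _

lemma integral_abs_rpow_mul_qKernel (α c : ℝ) :
    ∫ w in Icc (-(1 : ℝ) / 2) (1 / 2), |c| ^ (α + 2) * qKernel α (c * w) =
      |c| ^ (α + 1) * ∫ t in (-(|c| / 2))..(|c| / 2), qKernel α t := by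
  rcases eq_or_ne c 0 with rfl | hc
  · simp [qKernel]
  · have heven (w : ℝ) : qKernel α (c * w) = qKernel α (|c| * w) := by
      rw [← qKernel_abs, abs_mul, ← qKernel_abs α (|c| * w), abs_mul, abs_abs]
    have hc' : 0 < |c| := abs_pos.mpr hc
    rw [integral_Icc_eq_integral_Ioc, ← intervalIntegral.integral_of_le (by norm_num),
      intervalIntegral.integral_const_mul]
    simp only [heven]
    rw [intervalIntegral.integral_comp_mul_left _ hc'.ne', smul_eq_mul,
      show α + 2 = α + 1 + 1 by ring, Real.rpow_add_one hc'.ne', mul_assoc,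
      mul_inv_cancel_left₀ hc'.ne']
    congr 2 <;> ring

/-- The multiplier `q_k` of `Q`. The substitution `t = 2πkw`, which takes out the factor
`|2πk|^{α+1}`, turns the range `|w| ≤ 1/2` into `|t| ≤ π|k|`. -/
def qMult (α : ℝ) (k : ℤ) : ℝ :=
  (2 * π) ^ (α + 1) * ∫ t in (-(π * |(k : ℝ)|))..(π * |(k : ℝ)|), qKernel α t

lemma qMult_nonneg (α : ℝ) (k : ℤ) : 0 ≤ qMult α k :=
  mul_nonneg (by positivity) <| intervalIntegral.integral_nonneg
    (neg_le_self (by positivity)) fun _ _ => qKernel_nonneg _ _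

lemma qMult_le (hα : α ∈ Ioo (1 : ℝ) 3) (k : ℤ) :
    qMult α k ≤ (2 * π) ^ (α + 1) * ∫ t, qKernel α t := by
  rw [qMult, intervalIntegral.integral_of_le (neg_le_self (by positivity))]
  exact mul_le_mul_of_nonneg_left (setIntegral_le_integral (integrable_qKernel hα)
    (.of_forall (qKernel_nonneg α))) (by positivity)

lemma tendsto_qMult (hα : α ∈ Ioo (1 : ℝ) 3) :
    Tendsto (qMult α) cofinite (𝓝 ((2 * π) ^ (α + 1) * ∫ t, qKernel α t)) := by
  have hradius : Tendsto (fun k : ℤ => π * |(k : ℝ)|) cofinite atTop :=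
    ((tendsto_norm_cocompact_atTop (E := ℝ)).comp Int.tendsto_coe_cofinite).const_mul_atTop
      Real.pi_pos
  exact ((intervalIntegral_tendsto_integral (integrable_qKernel hα)
    tendsto_neg_atTop_atBot tendsto_id).comp hradius).const_mul _

lemma integral_abs_rpow_mul_qKernel_two_pi_mul (α : ℝ) (k : ℤ) :
    ∫ w in Icc (-(1 : ℝ) / 2) (1 / 2), |2 * π * k| ^ (α + 2) * qKernel α (2 * π * k * w) =
      qMult α k * |(k : ℝ)| ^ (α + 1) := by
  have habs : |2 * π * k| = 2 * π * |(k : ℝ)| := by rw [abs_mul, abs_of_pos Real.two_pi_pos]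
  have hhalf : 2 * π * |(k : ℝ)| / 2 = π * |(k : ℝ)| := by ring
  rw [integral_abs_rpow_mul_qKernel, habs, hhalf, Real.mul_rpow (by positivity) (by positivity),
    qMult]
  ring

end Kernel

section Gagliardo

variable {f γ : ℝ → Rn n} {s σ : ℝ}

lemma hasSum_integral_norm_comp_add_sub_sq (hf : Continuous f) (hp : Function.Periodic f 1)
    (w : ℝ) : HasSum (fun k : ℤ => (2 - 2 * Real.cos (2 * π * k * w)) * coefNormSq f k)
      (∫ u in Ioc (0 : ℝ) 1, ‖f (u + w) - f u‖ ^ 2) := by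
  have hdiff : Continuous fun u => f (u + w) - f u := by fun_prop
  have h := hasSum_coefInner_of_continuous hdiff hdiff
  simp only [real_inner_self_eq_norm_sq, funext (coefInner_comp_add_sub hf hf hp hp w),
    coefInner_self, ← Complex.ofReal_mul] at h
  exact Complex.hasSum_ofReal.mp h

lemma gagliardoSq_eq_tsum (hf : Continuous f) (hp : Function.Periodic f 1) (s : ℝ) :
    gagliardoSq s f = ∑' k : ℤ, ENNReal.ofReal (coefNormSq f k) *
      ∫⁻ w in Ioo (-(1 : ℝ) / 2) (1 / 2),
        ENNReal.ofReal ((2 - 2 * Real.cos (2 * π * k * w)) / |w| ^ (1 + 2 * s)) := by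
  set m : ℤ → ℝ → ℝ := fun k w => (2 - 2 * Real.cos (2 * π * k * w)) / |w| ^ (1 + 2 * s)
  have hm0 (k : ℤ) (w : ℝ) : 0 ≤ m k w :=
    div_nonneg (by linarith [Real.cos_le_one (2 * π * k * w)]) (by positivity)
  have hmeas (k : ℤ) : Measurable (m k) := by fun_prop
  have parseval (w : ℝ) :
      ∫⁻ u in Ioc (0 : ℝ) 1, ENNReal.ofReal (‖f (u + w) - f u‖ ^ 2 / |w| ^ (1 + 2 * s)) =
        ∑' k : ℤ, ENNReal.ofReal (coefNormSq f k) * ENNReal.ofReal (m k w) := by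
    have hsum := (hasSum_integral_norm_comp_add_sub_sq hf hp w).div_const (|w| ^ (1 + 2 * s))
    simp only [mul_div_right_comm] at hsum
    simp only [mul_comm (ENNReal.ofReal (coefNormSq f _)), ← ENNReal.ofReal_mul (hm0 _ w)]
    rw [← ENNReal.ofReal_tsum_of_nonneg (fun k => mul_nonneg (hm0 k w) (coefNormSq_nonneg f k))
      hsum.summable, hsum.tsum_eq, ← integral_div, ofReal_integral_eq_lintegral_ofReal]
    · exact (Continuous.integrableOn_Icc (by fun_prop)).mono_set Ioc_subset_Icc_self
    · exact .of_forall fun u => by positivity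
  rw [gagliardoSq, lintegral_lintegral_swap]
  · simp only [parseval]
    rw [lintegral_tsum fun k => ((hmeas k).ennreal_ofReal.const_mul _).aemeasurable]
    exact tsum_congr fun k => lintegral_const_mul _ (hmeas k).ennreal_ofReal
  · have hnum : Measurable fun p : ℝ × ℝ => ‖f (p.1 + p.2) - f p.1‖ ^ 2 :=
      Continuous.measurable (by fun_prop)
    have hden : Measurable fun p : ℝ × ℝ => |p.2| ^ (1 + 2 * s) := by fun_prop
    exact (hnum.div hden).ennreal_ofReal.aemeasurable

lemma two_mul_rpow_le_two_sub_two_mul_cos_div {β c w : ℝ} (hβ : 0 ≤ β) (hlow : π / 2 ≤ |c * w|)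
    (hup : |c * w| ≤ π) :
    2 * (|c| / π) ^ β ≤ (2 - 2 * Real.cos (c * w)) / |w| ^ β := by
  have hw : w ≠ 0 := right_ne_zero_of_mul (abs_pos.mp (Real.pi_div_two_pos.trans_le hlow))
  have hcos : Real.cos (c * w) ≤ 0 := by
    rw [← Real.cos_abs]
    exact Real.cos_nonpos_of_pi_div_two_le_of_le hlow (by linarith [Real.pi_pos])
  have hpow : (|c| / π) ^ β * |w| ^ β ≤ 1 := by
    rw [← Real.mul_rpow (by positivity) (by positivity), div_mul_eq_mul_div, ← abs_mul]
    exact Real.rpow_le_one (by positivity) (div_le_one_of_le₀ hup Real.pi_pos.le) hβ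
  rw [le_div_iff₀ (by positivity)]
  linarith

lemma le_lintegral_two_sub_two_mul_cos_div {β c : ℝ} (hβ : 0 ≤ β) (hc : 2 * π ≤ |c|) :
    ENNReal.ofReal ((|c| / π) ^ (β - 1)) ≤
      ∫⁻ w in Ioo (-(1 : ℝ) / 2) (1 / 2),
        ENNReal.ofReal ((2 - 2 * Real.cos (c * w)) / |w| ^ β) := by
  have := Real.pi_pos
  have hc0 : 0 < |c| := Real.two_pi_pos.trans_le hc
  set I : Set ℝ := Ioo (π / (2 * |c|)) (π / |c|) with hI
  have hsub : I ⊆ Ioo (-(1 : ℝ) / 2) (1 / 2) := by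
    refine Ioo_subset_Ioo (le_trans (by norm_num) (by positivity : 0 ≤ π / (2 * |c|))) ?_
    rw [div_le_iff₀ hc0]
    linarith
  have hlow : ∀ w ∈ I, 2 * (|c| / π) ^ β ≤ (2 - 2 * Real.cos (c * w)) / |w| ^ β := fun w hw => by
    have hcw : |c * w| = w * |c| := by
      rw [abs_mul, abs_of_pos (lt_trans (by positivity) hw.1), mul_comm]
    have hw1 : π < w * (2 * |c|) := (div_lt_iff₀ (by positivity)).mp hw.1
    have hw2 : w * |c| < π := (lt_div_iff₀ hc0).mp hw.2
    exact two_mul_rpow_le_two_sub_two_mul_cos_div hβ (by linarith) (by linarith)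
  calc ENNReal.ofReal ((|c| / π) ^ (β - 1))
      = ENNReal.ofReal (2 * (|c| / π) ^ β) * volume I := by
        rw [hI, Real.volume_Ioo, ← ENNReal.ofReal_mul (by positivity),
          Real.rpow_sub_one (by positivity)]
        congr 1
        field_simp
        ring
    _ = ∫⁻ _ in I, ENNReal.ofReal (2 * (|c| / π) ^ β) := (setLIntegral_const _ _).symm
    _ ≤ ∫⁻ w in I, ENNReal.ofReal ((2 - 2 * Real.cos (c * w)) / |w| ^ β) :=
        setLIntegral_mono' measurableSet_Ioo fun w hw => ENNReal.ofReal_le_ofReal (hlow w hw)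
    _ ≤ _ := lintegral_mono_set hsub

lemma summable_rpow_mul_coefNormSq_of_gagliardoSq_lt_top (hf : Continuous f)
    (hp : Function.Periodic f 1) (hs : 0 < s) (hfin : gagliardoSq s f < ⊤) :
    Summable fun k : ℤ => |(k : ℝ)| ^ (2 * s) * coefNormSq f k := by
  have hnonneg (k : ℤ) : 0 ≤ coefNormSq f k * (2 * |(k : ℝ)|) ^ (2 * s) :=
    mul_nonneg (coefNormSq_nonneg f k) (by positivity)
  have hle : ∑' k : ℤ, ENNReal.ofReal (coefNormSq f k * (2 * |(k : ℝ)|) ^ (2 * s)) ≤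
      gagliardoSq s f := by
    rw [gagliardoSq_eq_tsum hf hp]
    refine ENNReal.tsum_le_tsum fun k => ?_
    rw [ENNReal.ofReal_mul (coefNormSq_nonneg f k)]
    gcongr
    rcases eq_or_ne k 0 with rfl | hk
    · simp [Real.zero_rpow (by positivity : 2 * s ≠ 0)]
    · have hk1 : (1 : ℝ) ≤ |(k : ℝ)| := by exact_mod_cast Int.one_le_abs hk
      have habs : |2 * π * k| = 2 * π * |(k : ℝ)| := by rw [abs_mul, abs_of_pos Real.two_pi_pos]
      have hbase : |2 * π * k| / π = 2 * |(k : ℝ)| := by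
        rw [habs]
        field_simp
      have hmode := le_lintegral_two_sub_two_mul_cos_div (β := 1 + 2 * s) (by positivity)
        (habs ▸ le_mul_of_one_le_right Real.two_pi_pos.le hk1)
      rwa [hbase, add_sub_cancel_left] at hmode
  have hsum : Summable fun k : ℤ => (2 : ℝ) ^ (2 * s) * (|(k : ℝ)| ^ (2 * s) * coefNormSq f k) :=
    (ENNReal.summable_toReal (hle.trans_lt hfin).ne).congr fun k => by
      rw [ENNReal.toReal_ofReal (hnonneg k), Real.mul_rpow zero_le_two (abs_nonneg _)]
      ring
  exact (summable_mul_left_iff (by positivity)).mp hsum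

lemma coefNormSq_deriv (hγ : ContDiff ℝ 1 γ) (hend : γ 0 = γ 1) (k : ℤ) :
    coefNormSq (deriv γ) k = (2 * π * k) ^ 2 * coefNormSq γ k := by
  have h := coefInner_deriv hγ hγ hend hend k
  rw [coefInner_self, coefInner_self] at h
  exact_mod_cast h

lemma periodic_deriv_s11 {𝕜 E : Type*} [NontriviallyNormedField 𝕜] [NormedAddCommGroup E]
    [NormedSpace 𝕜 E] {g : 𝕜 → E} {T : 𝕜} (hg : Function.Periodic g T) :
    Function.Periodic (deriv g) T := fun x => by
  rw [← deriv_comp_add_const, show (fun x => g (x + T)) = g from funext hg]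

lemma summable_rpow_mul_coefNormSq (hσ : 0 < σ) (hγ : MemH1 σ γ) :
    Summable fun k : ℤ => |(k : ℝ)| ^ (2 * σ + 2) * coefNormSq γ k := by
  obtain ⟨hp, hdiff, hfin⟩ := hγ
  have hsum := summable_rpow_mul_coefNormSq_of_gagliardoSq_lt_top hdiff.continuous_deriv_one
    (periodic_deriv_s11 hp) hσ hfin
  refine (summable_mul_left_iff (a := (2 * π) ^ 2) (by positivity)).mp (hsum.congr fun k => ?_)
  rw [coefNormSq_deriv hdiff (by simpa using (hp 0).symm),
    Real.rpow_add_of_nonneg (abs_nonneg _) (by positivity) zero_le_two, Real.rpow_two, sq_abs]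
  ring

end Gagliardo

section PrincipalValue

lemma integrable_and_hasSum_integral_of_summable_integral_norm {X ι E : Type*} [MeasurableSpace X]
    {μ : Measure X} [Countable ι] [NormedAddCommGroup E] [NormedSpace ℝ E] {F : ι → X → E}
    {f : X → E} (hF : ∀ i, Integrable (F i) μ) (hsum : Summable fun i => ∫ x, ‖F i x‖ ∂μ)
    (hf : ∀ᵐ x ∂μ, HasSum (fun i => F i x) (f x)) :
    Integrable f μ ∧ HasSum (fun i => ∫ x, F i x ∂μ) (∫ x, f x ∂μ) := by
  have hmeas : AEStronglyMeasurable f μ :=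
    aestronglyMeasurable_of_tendsto_ae (atTop : Filter (Finset ι))
      (fun t => Finset.aestronglyMeasurable_fun_sum t fun i _ => (hF i).aestronglyMeasurable) hf
  refine ⟨⟨hmeas, ?_⟩, ?_⟩
  · calc ∫⁻ x, ‖f x‖ₑ ∂μ ≤ ∫⁻ x, ∑' i, ‖F i x‖ₑ ∂μ :=
          lintegral_mono_ae (hf.mono fun x hx => hx.tsum_eq ▸ enorm_tsum_le_tsum_enorm)
      _ = ∑' i, ∫⁻ x, ‖F i x‖ₑ ∂μ := lintegral_tsum fun i => (hF i).1.enorm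
      _ = ∑' i, ENNReal.ofReal (∫ x, ‖F i x‖ ∂μ) := by
          simp only [ofReal_integral_norm_eq_lintegral_enorm (hF _)]
      _ = ENNReal.ofReal (∑' i, ∫ x, ‖F i x‖ ∂μ) :=
          (ENNReal.ofReal_tsum_of_nonneg (fun i => integral_nonneg fun x => norm_nonneg _)
            hsum).symm
      _ < ⊤ := ENNReal.ofReal_lt_top
  · rw [integral_congr_ae (hf.mono fun x hx => hx.tsum_eq.symm)]
    exact hasSum_integral_of_summable_integral_norm hF hsum

variable {α ε : ℝ} {γ h : ℝ → Rn n}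

lemma Wset_subset (hε : 0 < ε) : Wset ε ⊆ Icc (-(1 : ℝ) / 2) (1 / 2) := by
  rintro w (hw | hw)
  · exact ⟨hw.1, by linarith [hw.2]⟩
  · exact ⟨by linarith [hw.1], hw.2⟩

lemma ne_zero_of_mem_Wset {w : ℝ} (hε : 0 < ε) (hw : w ∈ Wset ε) : w ≠ 0 := by
  rcases hw with hw | hw
  · exact (hw.2.trans_lt (neg_neg_of_pos hε)).ne
  · exact (hε.trans_le hw.1).ne'

lemma measurableSet_Wset (ε : ℝ) : MeasurableSet (Wset ε) :=
  measurableSet_Icc.union measurableSet_Icc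

lemma aecover_Wset : AECover (volume.restrict (Icc (-(1 : ℝ) / 2) (1 / 2))) (𝓝[>] 0) Wset := by
  refine ⟨?_, measurableSet_Wset⟩
  filter_upwards [ae_restrict_of_ae (Measure.ae_ne volume 0), ae_restrict_mem measurableSet_Icc]
    with w hw0 hw
  filter_upwards [Ioo_mem_nhdsGT (abs_pos.mpr hw0)] with ε hε
  rcases le_abs'.mp hε.2.le with hneg | hpos
  · exact Or.inl ⟨hw.1, hneg⟩
  · exact Or.inr ⟨hpos, hw.2⟩

lemma tendsto_setIntegral_Wset {E : Type*} [NormedAddCommGroup E] [NormedSpace ℝ E] {f : ℝ → E}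
    (hf : IntegrableOn f (Icc (-(1 : ℝ) / 2) (1 / 2))) :
    Tendsto (fun ε : ℝ => ∫ w in Wset ε, f w) (𝓝[>] 0)
      (𝓝 (∫ w in Icc (-(1 : ℝ) / 2) (1 / 2), f w)) := by
  refine (aecover_Wset.integral_tendsto_of_countably_generated hf).congr' ?_
  filter_upwards [self_mem_nhdsWithin] with ε hε
  rw [Measure.restrict_restrict (measurableSet_Wset ε), inter_eq_left.mpr (Wset_subset hε)]

lemma continuousOn_uncurry_Qintegrand (α : ℝ) (hγ : ContDiff ℝ 1 γ) (hh : ContDiff ℝ 1 h) :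
    ContinuousOn (Function.uncurry (Qintegrand α γ h)) {p | p.2 ≠ 0} := by
  have := hγ.continuous_deriv_one
  have := hh.continuous_deriv_one
  have hγ0 := hγ.continuous
  have hh0 := hh.continuous
  have hpow (β : ℝ) : ContinuousOn (fun p : ℝ × ℝ => |p.2| ^ β) {p | p.2 ≠ 0} :=
    ContinuousOn.rpow_const (by fun_prop) fun p hp => Or.inl (abs_ne_zero.mpr hp)
  have hpow0 (β : ℝ) : ∀ p ∈ {p : ℝ × ℝ | p.2 ≠ 0}, |p.2| ^ β ≠ 0 := fun p hp =>
    (Real.rpow_pos_of_pos (abs_pos.mpr hp) β).ne'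
  exact (ContinuousOn.div (by fun_prop) (hpow _) (hpow0 _)).sub
    (ContinuousOn.div (by fun_prop) (hpow _) (hpow0 _))

lemma integral_Qintegrand_swap (α : ℝ) (hγ : ContDiff ℝ 1 γ) (hh : ContDiff ℝ 1 h) (hε : 0 < ε) :
    ∫ u in Ioc (0 : ℝ) 1, ∫ w in Wset ε, Qintegrand α γ h u w =
      ∫ w in Wset ε, ∫ u in Ioc (0 : ℝ) 1, Qintegrand α γ h u w := by
  refine integral_integral_swap ?_
  rw [Measure.prod_restrict]
  have hcompact : IsCompact (Icc (0 : ℝ) 1 ×ˢ Wset ε) :=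
    isCompact_Icc.prod (isCompact_Icc.union isCompact_Icc)
  have hcont := (continuousOn_uncurry_Qintegrand α hγ hh).mono fun p
    (hp : p ∈ Icc (0 : ℝ) 1 ×ˢ Wset ε) => ne_zero_of_mem_Wset hε hp.2
  exact (hcont.integrableOn_compact hcompact).mono_set (prod_mono_left Ioc_subset_Icc_self)

lemma hasSum_integral_Qintegrand (α : ℝ) (hγ : ContDiff ℝ 1 γ) (hh : ContDiff ℝ 1 h)
    (hγp : Function.Periodic γ 1) (hhp : Function.Periodic h 1) {w : ℝ} (hw : w ≠ 0) :
    HasSum (fun k : ℤ => ((|2 * π * k| ^ (α + 2) * qKernel α (2 * π * k * w) : ℝ) : ℂ) *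
      coefInner γ h k) ((∫ u in Ioc (0 : ℝ) 1, Qintegrand α γ h u w : ℝ) : ℂ) := by
  have hγ' := hγ.continuous_deriv_one
  have hh' := hh.continuous_deriv_one
  have hγ0 := hγ.continuous
  have hh0 := hh.continuous
  have hderiv := (hasSum_coefInner_of_continuous hγ' hh').div_const ((|w| ^ α : ℝ) : ℂ)
  have hdiff := (hasSum_coefInner_of_continuous (F := fun u => γ (u + w) - γ u)
    (G := fun u => h (u + w) - h u) (by fun_prop) (by fun_prop)).div_const
      ((|w| ^ (α + 2) : ℝ) : ℂ)
  convert! hderiv.sub hdiff using 1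
  · funext k
    rw [coefInner_deriv hγ hh (by simpa using (hγp 0).symm) (by simpa using (hhp 0).symm),
      coefInner_comp_add_sub hγ0 hh0 hγp hhp, abs_rpow_mul_qKernel α _ hw]
    push_cast
    ring
  · simp only [Qintegrand]
    rw [integral_sub, integral_div, integral_div]
    · push_cast
      rfl
    all_goals exact (Continuous.integrableOn_Icc (by fun_prop)).mono_set Ioc_subset_Icc_self

lemma summable_norm_qMult_mul_coefInner (hα : α ∈ Ioo (1 : ℝ) 3) (hγ : MemH1 ((α - 1) / 2) γ)
    (hh : MemH1 ((α - 1) / 2) h) :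
    Summable fun k : ℤ => ‖((qMult α k * |(k : ℝ)| ^ (α + 1) : ℝ) : ℂ) * coefInner γ h k‖ := by
  have hσ : 0 < (α - 1) / 2 := by linarith [hα.1]
  have hexp : 2 * ((α - 1) / 2) + 2 = α + 1 := by ring
  have hcoef := (summable_rpow_mul_coefNormSq hσ hγ).add (summable_rpow_mul_coefNormSq hσ hh)
  rw [hexp] at hcoef
  refine (hcoef.mul_left ((2 * π) ^ (α + 1) * ∫ t, qKernel α t)).of_norm_bounded fun k => ?_
  have hq := qMult_nonneg α k
  have hcoef_le : ‖coefInner γ h k‖ ≤ coefNormSq γ k + coefNormSq h k := by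
    linarith [norm_coefInner_le γ h k, norm_nonneg (coefInner γ h k)]
  rw [norm_norm, norm_mul, Complex.norm_real, Real.norm_of_nonneg (by positivity), ← mul_add,
    mul_assoc]
  exact mul_le_mul (qMult_le hα k) (by gcongr) (by positivity) (hq.trans (qMult_le hα k))

lemma integrableOn_and_hasSum_integral_Qintegrand (hα : α ∈ Ioo (1 : ℝ) 3)
    (hγ : MemH1 ((α - 1) / 2) γ) (hh : MemH1 ((α - 1) / 2) h) :
    IntegrableOn (fun w => ∫ u in Ioc (0 : ℝ) 1, Qintegrand α γ h u w)
        (Icc (-(1 : ℝ) / 2) (1 / 2)) ∧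
      HasSum (fun k : ℤ => ((qMult α k * |(k : ℝ)| ^ (α + 1) : ℝ) : ℂ) * coefInner γ h k)
        ((∫ w in Icc (-(1 : ℝ) / 2) (1 / 2),
          ∫ u in Ioc (0 : ℝ) 1, Qintegrand α γ h u w : ℝ) : ℂ) := by
  set J : ℝ → ℝ := fun w => ∫ u in Ioc (0 : ℝ) 1, Qintegrand α γ h u w
  set m : ℤ → ℝ → ℝ := fun k w => |2 * π * k| ^ (α + 2) * qKernel α (2 * π * k * w)
  have hm0 (k : ℤ) (w : ℝ) : 0 ≤ m k w := mul_nonneg (by positivity) (qKernel_nonneg _ _)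
  have hmint (k : ℤ) : Integrable (m k) := integrable_abs_rpow_mul_qKernel hα _
  have hmodes : ∀ᵐ w ∂volume.restrict (Icc (-(1 : ℝ) / 2) (1 / 2)),
      HasSum (fun k => (m k w : ℂ) * coefInner γ h k) (J w : ℂ) :=
    ae_restrict_of_ae <| (Measure.ae_ne volume 0).mono fun w hw =>
      hasSum_integral_Qintegrand α hγ.2.1 hh.2.1 hγ.1 hh.1 hw
  have hsum : Summable fun k =>
      ∫ w in Icc (-(1 : ℝ) / 2) (1 / 2), ‖(m k w : ℂ) * coefInner γ h k‖ :=
    (summable_norm_qMult_mul_coefInner hα hγ hh).congr fun k => by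
      rw [norm_mul, Complex.norm_real,
        Real.norm_of_nonneg (mul_nonneg (qMult_nonneg α k) (by positivity))]
      simp only [norm_mul, Complex.norm_real, Real.norm_of_nonneg (hm0 k _)]
      rw [integral_mul_const, integral_abs_rpow_mul_qKernel_two_pi_mul]
  obtain ⟨hJ, hseries⟩ := integrable_and_hasSum_integral_of_summable_integral_norm
    (fun k => (hmint k).integrableOn.ofReal.mul_const _) hsum hmodes
  refine ⟨hJ.re, ?_⟩
  simpa only [integral_mul_const, integral_complex_ofReal,
    integral_abs_rpow_mul_qKernel_two_pi_mul, m] using hseries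

end PrincipalValue

theorem statement11_general {n : ℕ} {α : ℝ} (hα : α ∈ Ioo (1 : ℝ) 3) :
    ∃ q : ℤ → ℝ, ∃ c : ℝ, 0 < c ∧
      Tendsto q Filter.cofinite (𝓝 c) ∧
      ∀ γ h : ℝ → Rn n, MemH1 ((α - 1) / 2) γ → MemH1 ((α - 1) / 2) h →
        ∃ Qv : ℝ,
          Tendsto (fun ε : ℝ => ∫ u in Ioc (0 : ℝ) 1, ∫ w in Wset ε, Qintegrand α γ h u w)
            (𝓝[>] (0 : ℝ)) (𝓝 Qv) ∧
          Summable (fun k : ℤ =>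
            ‖((q k * |(k : ℝ)| ^ (α + 1) : ℝ) : ℂ) *
              ∑ j, fCoef γ k j * star (fCoef h k j)‖) ∧
          HasSum (fun k : ℤ =>
            ((q k * |(k : ℝ)| ^ (α + 1) : ℝ) : ℂ) *
              ∑ j, fCoef γ k j * star (fCoef h k j)) (Qv : ℂ) := by
  refine ⟨qMult α, (2 * π) ^ (α + 1) * ∫ t, qKernel α t,
    mul_pos (by positivity) (integral_qKernel_pos hα), tendsto_qMult hα, fun γ h hγ hh => ?_⟩
  obtain ⟨hint, hseries⟩ := integrableOn_and_hasSum_integral_Qintegrand hα hγ hh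
  refine ⟨∫ w in Icc (-(1 : ℝ) / 2) (1 / 2), ∫ u in Ioc (0 : ℝ) 1, Qintegrand α γ h u w, ?_,
    summable_norm_qMult_mul_coefInner hα hγ hh, hseries⟩
  refine (tendsto_setIntegral_Wset hint).congr' ?_
  filter_upwards [self_mem_nhdsWithin] with ε hε
  exact (integral_Qintegrand_swap α hγ.2.1 hh.2.1 hε).symm

/-- There is a sequence `(q_k)` of reals converging to a positive constant as
`|k| → ∞` such that for all `γ, h ∈ H^{(α+1)/2,2}` the principal value `Q(γ,h)` exists, the
series `Σ q_k |k|^{α+1} ⟪γ̂(k), ĥ(k)⟫_{ℂⁿ}` converges absolutely, and `Q(γ,h)` equals its sum. -/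
theorem statement11 {n : ℕ} (hn : 2 ≤ n) {α : ℝ} (hα : α ∈ Ioo (2:ℝ) 3) :
    ∃ q : ℤ → ℝ, ∃ c : ℝ, 0 < c ∧
      Tendsto q Filter.cofinite (𝓝 c) ∧
      ∀ γ h : ℝ → Rn n, MemH1 ((α - 1) / 2) γ → MemH1 ((α - 1) / 2) h →
        ∃ Qv : ℝ,
          Tendsto (fun ε : ℝ => ∫ u in Ioc (0:ℝ) 1, ∫ w in Wset ε, Qintegrand α γ h u w)
            (𝓝[>] (0:ℝ)) (𝓝 Qv) ∧
          Summable (fun k : ℤ =>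
            ‖((q k * |(k : ℝ)| ^ (α + 1) : ℝ) : ℂ) *
              ∑ j, fCoef γ k j * star (fCoef h k j)‖) ∧
          HasSum (fun k : ℤ =>
            ((q k * |(k : ℝ)| ^ (α + 1) : ℝ) : ℂ) *
              ∑ j, fCoef γ k j * star (fCoef h k j)) (Qv : ℂ) :=
  statement11_general ⟨by linarith [hα.1], hα.2⟩

end
end
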